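/- arXiv:2311.07018 — 2 statements merged into one kernel-verified Lean document; each statement's English description precedes it below -/
import Mathlib

section
/- Let n, m ∈ ℕ, t ≥ 0, δ > 0 and κ > 0. Let A : [t,∞) → ℝ^{n×n}, B : [t,∞) → ℝ^{n×m}, Q : [t,∞) → Sym_n(ℝ), R : [t,∞) → Sym_m(ℝ) be measurable with uniformly bounded operator norms, with Q(s) ⪰ 0, R(s) ⪰ δI_m, and ⟨(A(s) + A(s)ᵀ)v, v⟩ ≤ −2κ|v|² for all v ∈ ℝ^n and almost every s. Then there exists a constant k > 0 (depending only on n, m, δ, κ and the bounds on the coefficients) such that for every K ∈ [0, min(k, κ)) and every x_t ∈ ℝ^n, the coupled forward–backward system x'(s) = A(s)x(s) − B(s)R(s)^{-1}B(s)ᵀ y(s), y'(s) = −(Q(s)x(s) + ((2K)I + A(s))ᵀ y(s)), x(t) = x_t, admits a unique pair of locally absolutely continuous solutions (x, y) on [t,∞) with x, y ∈ L^{2,K}(t,∞;ℝ^n); moreover there is a constant C > 0, independent of x_t, such that e^{2Kt}|y(t)|² + ∫_t^∞ e^{2Ks}(|x(s)|² + |y(s)|²) ds ≤ C e^{2Kt}|x_t|².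 -/
open MeasureTheory Matrix

/-- `(x, y)` is a solution, in the weighted space `L^{2,K}(t,∞)`, of the
deterministic Hamiltonian forward–backward system
`x' = A x - B R⁻¹ Bᵀ y`, `y' = -(Q x + ((2K)I + A)ᵀ y)`, `x(t) = xt`,
the equations being understood in the locally absolutely continuous
(integral) sense. -/
def IsHamSol (t K : ℝ) {n m : ℕ} (A : ℝ → Matrix (Fin n) (Fin n) ℝ)
    (B : ℝ → Matrix (Fin n) (Fin m) ℝ) (Q : ℝ → Matrix (Fin n) (Fin n) ℝ)
    (R : ℝ → Matrix (Fin m) (Fin m) ℝ) (xt : Fin n → ℝ)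
    (x y : ℝ → (Fin n → ℝ)) : Prop :=
  x t = xt ∧
  (∀ T, t ≤ T → MeasureTheory.IntegrableOn (fun s =>
    A s *ᵥ x s - B s *ᵥ ((R s)⁻¹ *ᵥ ((B s)ᵀ *ᵥ y s))) (Set.Icc t T)) ∧
  (∀ s, t ≤ s → x s = xt + ∫ r in t..s,
    (A r *ᵥ x r - B r *ᵥ ((R r)⁻¹ *ᵥ ((B r)ᵀ *ᵥ y r)))) ∧
  (∀ T, t ≤ T → MeasureTheory.IntegrableOn (fun s =>
    -(Q s *ᵥ x s + (((2*K) • (1 : Matrix (Fin n) (Fin n) ℝ) + A s)ᵀ) *ᵥ y s))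
    (Set.Icc t T)) ∧
  (∀ s, t ≤ s → y s = y t + ∫ r in t..s,
    (-(Q r *ᵥ x r + (((2*K) • (1 : Matrix (Fin n) (Fin n) ℝ) + A r)ᵀ) *ᵥ y r))) ∧
  MeasureTheory.IntegrableOn (fun s => Real.exp (2*K*s) * (x s ⬝ᵥ x s)) (Set.Ici t) ∧
  MeasureTheory.IntegrableOn (fun s => Real.exp (2*K*s) * (y s ⬝ᵥ y s)) (Set.Ici t)

/-!
Multiplying `x` and `y` by `e^{Ks}` turns the weighted system into the unweighted one with drift
`A + K`, which is still dissipative because `K < κ`.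

Along a square-integrable solution `⟪x, y⟫' = -(⟪Q x, x⟫ + ⟪G y, y⟫)` with `G = B R⁻¹ B†`, so
`⟪x t, y t⟫` equals the total cost. Since `Q` and `G` are cocoercive, this cost bounds the `L²`
norms of `Q x` and `G y`, and dissipativity of the drift then bounds `x` and `y` in terms of `x t`;
this is the estimate, and it gives uniqueness by linearity.

For existence, the system is the optimality system of a coercive linear-quadratic control problem on
`L²(t, ∞)`. The state equation `x' = A x + B u` is solved there by a Neumann series around the
resolvent `J` of `d/ds + ω`: one has `‖J‖ ≤ 1/ω`, while dissipativity gives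
`‖A + ω‖² ≤ L² - 2ωκ + ω² < ω²` for large `ω`.
-/

section Primitive

open Set Filter Topology intervalIntegral

theorem absolutelyContinuousOnInterval_of_dist_le_integral {X : Type*} [PseudoMetricSpace X]
    {x : ℝ → X} {φ : ℝ → ℝ} {a b : ℝ} (hab : a ≤ b)
    (hφ : IntervalIntegrable φ volume a b)
    (hx : ∀ r s, a ≤ r → r ≤ s → s ≤ b → dist (x r) (x s) ≤ ∫ q in r..s, φ q) :
    AbsolutelyContinuousOnInterval x a b := by
  have hsub {r s : ℝ} (hr : r ∈ uIcc a b) (hs : s ∈ uIcc a b) : IntervalIntegrable φ volume r s :=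
    hφ.mono_set (uIcc_subset_uIcc hr hs)
  have hdist (r s : ℝ) (hr : r ∈ uIcc a b) (hs : s ∈ uIcc a b) :
      dist (x r) (x s) ≤ dist (∫ q in a..r, φ q) (∫ q in a..s, φ q) := by
    wlog hrs : r ≤ s generalizing r s
    · rw [dist_comm (x r), dist_comm (∫ q in a..r, φ q)]
      exact this s r hs hr (le_of_not_ge hrs)
    rw [uIcc_of_le hab] at hr hs
    rw [dist_comm (∫ q in a..r, φ q), Real.dist_eq, integral_interval_sub_left
      (hsub left_mem_uIcc (uIcc_of_le hab ▸ hs)) (hsub left_mem_uIcc (uIcc_of_le hab ▸ hr))]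
    exact (hx r s hr.1 hrs hs.2).trans (le_abs_self _)
  have hΦ := hφ.absolutelyContinuousOnInterval_intervalIntegral left_mem_uIcc
  rw [absolutelyContinuousOnInterval_iff] at hΦ ⊢
  intro ε hε
  obtain ⟨δ, hδ, hsum⟩ := hΦ ε hε
  refine ⟨δ, hδ, fun I hI hlen ↦ (Finset.sum_le_sum fun i hi ↦ ?_).trans_lt (hsum I hI hlen)⟩
  exact hdist _ _ (hI.1 i hi).1 (hI.1 i hi).2

variable {E F G : Type*} [NormedAddCommGroup E] [NormedSpace ℝ E]
  [NormedAddCommGroup F] [NormedSpace ℝ F] [NormedAddCommGroup G] [NormedSpace ℝ G]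
  {t : ℝ} {f g x y : ℝ → E}

/-- `x` is locally absolutely continuous on `[t, ∞)` with derivative `f`, in the integral sense:
`f` is locally integrable and `x s = x t + ∫ r in t..s, f r` for all `s ≥ t`. -/
structure IsPrimitiveFrom (t : ℝ) (f x : ℝ → E) : Prop where
  integrableOn : ∀ T, t ≤ T → IntegrableOn f (Icc t T)
  eq_integral : ∀ s, t ≤ s → x s = x t + ∫ r in t..s, f r

theorem isPrimitiveFrom_integral (hf : ∀ T, t ≤ T → IntegrableOn f (Icc t T)) (c : E) :
    IsPrimitiveFrom t f fun s ↦ c + ∫ r in t..s, f r :=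
  ⟨hf, fun s _ ↦ by simp⟩

namespace IsPrimitiveFrom

theorem congr (hx : IsPrimitiveFrom t f x) (hxy : ∀ s, t ≤ s → x s = y s) :
    IsPrimitiveFrom t f y :=
  ⟨hx.integrableOn, fun s hs ↦ by rw [← hxy s hs, ← hxy t le_rfl, hx.eq_integral s hs]⟩

theorem congr_deriv (h : IsPrimitiveFrom t f x) (hfg : f =ᵐ[volume.restrict (Ici t)] g) :
    IsPrimitiveFrom t g x := by
  refine ⟨fun T hT ↦ (h.integrableOn T hT).congr_fun_ae
    (ae_restrict_of_ae_restrict_of_subset Icc_subset_Ici_self hfg), fun s hs ↦ ?_⟩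
  rw [h.eq_integral s hs, integral_congr_ae_restrict]
  rw [uIoc_of_le hs]
  exact ae_restrict_of_ae_restrict_of_subset (Ioc_subset_Icc_self.trans Icc_subset_Ici_self) hfg

theorem intervalIntegrable (h : IsPrimitiveFrom t f x) {r s : ℝ} (hr : t ≤ r) (hs : t ≤ s) :
    IntervalIntegrable f volume r s := by
  have key {q : ℝ} (hq : t ≤ q) : IntervalIntegrable f volume t q :=
    (intervalIntegrable_iff_integrableOn_Icc_of_le hq).2 (h.integrableOn q hq)
  exact (key hr).symm.trans (key hs)

theorem sub_eq_integral (h : IsPrimitiveFrom t f x) {r s : ℝ} (hr : t ≤ r) (hs : t ≤ s) :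
    x s - x r = ∫ q in r..s, f q := by
  rw [h.eq_integral s hs, h.eq_integral r hr, add_sub_add_left_eq_sub,
    integral_interval_sub_left (h.intervalIntegrable le_rfl hs) (h.intervalIntegrable le_rfl hr)]

theorem dist_le_integral_norm (h : IsPrimitiveFrom t f x) {r s : ℝ} (hr : t ≤ r) (hrs : r ≤ s) :
    dist (x r) (x s) ≤ ∫ q in r..s, ‖f q‖ := by
  rw [dist_comm, dist_eq_norm, h.sub_eq_integral hr (hr.trans hrs)]
  exact norm_integral_le_integral_norm hrs

theorem continuousOn (h : IsPrimitiveFrom t f x) {T : ℝ} (hT : t ≤ T) : ContinuousOn x (Icc t T) :=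
  (uIcc_of_le hT ▸ (absolutelyContinuousOnInterval_of_dist_le_integral hT
    (h.intervalIntegrable le_rfl hT).norm fun _ _ hr hrs _ ↦
      h.dist_le_integral_norm hr hrs).continuousOn :)

theorem aestronglyMeasurable (h : IsPrimitiveFrom t f x) :
    AEStronglyMeasurable x (volume.restrict (Ici t)) := by
  refine (ContinuousOn.aestronglyMeasurable (fun s hs ↦ ?_) measurableSet_Ici)
  refine (h.continuousOn (le_add_of_le_of_nonneg hs zero_le_one) s
    ⟨hs, by simp⟩).mono_of_mem_nhdsWithin ?_
  filter_upwards [self_mem_nhdsWithin, mem_nhdsWithin_of_mem_nhds (Iic_mem_nhds (lt_add_one s))]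
    with r hr hrs using ⟨hr, hrs⟩

theorem aestronglyMeasurable_deriv (h : IsPrimitiveFrom t f x) :
    AEStronglyMeasurable f (volume.restrict (Ici t)) := by
  refine (aestronglyMeasurable_iUnion_iff (s := fun n : ℕ ↦ Icc t (t + n))).2 (fun n ↦
    (h.integrableOn _ (by simp)).1) |>.mono_set fun s hs ↦ ?_
  obtain ⟨n, hn⟩ := exists_nat_ge (s - t)
  exact mem_iUnion.2 ⟨n, hs, by linarith⟩

theorem exists_norm_le (h : IsPrimitiveFrom t f x) {T : ℝ} (hT : t ≤ T) :
    ∃ C, 0 ≤ C ∧ ∀ s ∈ Icc t T, ‖x s‖ ≤ C := by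
  obtain ⟨C, hC⟩ := isCompact_Icc.exists_bound_of_continuousOn (h.continuousOn hT)
  exact ⟨C, (norm_nonneg _).trans (hC t ⟨le_rfl, hT⟩), hC⟩

theorem ae_hasDerivAt [CompleteSpace E] (h : IsPrimitiveFrom t f x) {T : ℝ} (hT : t ≤ T) :
    ∀ᵐ s, s ∈ uIcc t T → HasDerivAt x (f s) s := by
  filter_upwards [(h.intervalIntegrable le_rfl hT).ae_hasDerivAt_integral,
    measure_eq_zero_iff_ae_notMem.1 (measure_singleton (μ := volume) t)] with s hs hst hsT
  have hts : t < s := lt_of_le_of_ne (uIcc_of_le hT ▸ hsT).1 (Ne.symm hst)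
  refine ((hs hsT t left_mem_uIcc).const_add (x t)).congr_of_eventuallyEq ?_
  filter_upwards [Ioi_mem_nhds hts] with r hr using h.eq_integral r (le_of_lt hr)

theorem of_ae_hasDerivAt [CompleteSpace E] (hf : ∀ T, t ≤ T → IntegrableOn f (Icc t T))
    (hderiv : ∀ T, t ≤ T → ∀ᵐ s, s ∈ uIcc t T → HasDerivAt x (f s) s)
    (hx : ∀ T, t ≤ T → AbsolutelyContinuousOnInterval x t T) : IsPrimitiveFrom t f x := by
  refine ⟨hf, fun s hs ↦ ?_⟩
  have hprim : IsPrimitiveFrom t f fun s ↦ (0 : E) + ∫ r in t..s, f r :=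
    isPrimitiveFrom_integral hf 0
  have hac := (hx s hs).sub (absolutelyContinuousOnInterval_of_dist_le_integral hs
    (hprim.intervalIntegrable le_rfl hs).norm fun _ _ hr hrs _ ↦ hprim.dist_le_integral_norm hr hrs)
  obtain ⟨c, hc⟩ := hac.const_of_ae_hasDerivAt_zero <| by
    filter_upwards [hderiv s hs, hprim.ae_hasDerivAt hs] with r hxr hr hrs
    simpa using (hxr hrs).sub (hr hrs)
  have hleft := hc t left_mem_uIcc
  have hright := hc s right_mem_uIcc
  simp only [Pi.sub_apply, integral_same, zero_add, sub_zero] at hleft hright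
  rw [hleft, ← hright, sub_add_cancel]

theorem bilin [CompleteSpace E] [CompleteSpace F] [CompleteSpace G] (B : E →L[ℝ] F →L[ℝ] G)
    {g y : ℝ → F} (hx : IsPrimitiveFrom t f x) (hy : IsPrimitiveFrom t g y) :
    IsPrimitiveFrom t (fun s ↦ B (x s) (g s) + B (f s) (y s)) fun s ↦ B (x s) (y s) := by
  refine of_ae_hasDerivAt (fun T hT ↦ ?_) (fun T hT ↦ ?_) fun T hT ↦ ?_
  · obtain ⟨M, -, hM⟩ := hx.exists_norm_le hT
    obtain ⟨N, -, hN⟩ := hy.exists_norm_le hT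
    have hsubset : Icc t T ⊆ Ici t := Icc_subset_Ici_self
    exact (B.integrable_of_bilin_of_bdd_left M (hx.aestronglyMeasurable.mono_set hsubset)
      (ae_restrict_of_forall_mem measurableSet_Icc hM) (hy.integrableOn T hT)).add
      (B.integrable_of_bilin_of_bdd_right N (hx.integrableOn T hT)
        (hy.aestronglyMeasurable.mono_set hsubset)
        (ae_restrict_of_forall_mem measurableSet_Icc hN))
  · filter_upwards [hx.ae_hasDerivAt hT, hy.ae_hasDerivAt hT] with s hxs hys hs
    exact B.hasDerivAt_of_bilinear (fun _ ↦ hxs hs) fun _ ↦ hys hs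
  · obtain ⟨M, hM0, hM⟩ := hx.exists_norm_le hT
    obtain ⟨N, hN0, hN⟩ := hy.exists_norm_le hT
    refine absolutelyContinuousOnInterval_of_dist_le_integral
      (φ := fun s ↦ ‖B‖ * M * ‖g s‖ + ‖B‖ * N * ‖f s‖) hT
      (((hy.intervalIntegrable le_rfl hT).norm.const_mul _).add
        ((hx.intervalIntegrable le_rfl hT).norm.const_mul _)) fun r s hr hrs hs ↦ ?_
    have hts := hr.trans hrs
    have hBdist : dist (B (x r) (y r)) (B (x s) (y s)) ≤
        ‖B‖ * M * dist (y r) (y s) + ‖B‖ * N * dist (x r) (x s) := by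
      calc dist (B (x r) (y r)) (B (x s) (y s))
          = ‖B (x r) (y r - y s) + B (x r - x s) (y s)‖ := by
            rw [dist_eq_norm, map_sub, map_sub, _root_.sub_apply, sub_add_sub_cancel]
        _ ≤ ‖B‖ * ‖x r‖ * ‖y r - y s‖ + ‖B‖ * ‖x r - x s‖ * ‖y s‖ :=
            norm_add_le_of_le (B.le_opNorm₂ _ _) (B.le_opNorm₂ _ _)
        _ ≤ ‖B‖ * M * dist (y r) (y s) + ‖B‖ * dist (x r) (x s) * N := by
            rw [← dist_eq_norm, ← dist_eq_norm]
            gcongr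
            exacts [hM r ⟨hr, hrs.trans hs⟩, hN s ⟨hts, hs⟩]
        _ = _ := by ring
    rw [intervalIntegral.integral_add ((hy.intervalIntegrable hr hts).norm.const_mul _)
      ((hx.intervalIntegrable hr hts).norm.const_mul _), intervalIntegral.integral_const_mul,
      intervalIntegral.integral_const_mul]
    refine hBdist.trans ?_
    gcongr
    exacts [hy.dist_le_integral_norm hr hrs, hx.dist_le_integral_norm hr hrs]

theorem clm_comp [CompleteSpace E] [CompleteSpace F] (L : E →L[ℝ] F) (hx : IsPrimitiveFrom t f x) :
    IsPrimitiveFrom t (fun s ↦ L (f s)) fun s ↦ L (x s) := by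
  refine ⟨fun T hT ↦ L.integrable_comp (hx.integrableOn T hT), fun s hs ↦ ?_⟩
  rw [hx.eq_integral s hs, map_add, L.intervalIntegral_comp_comm (hx.intervalIntegrable le_rfl hs)]

protected theorem sub (hx : IsPrimitiveFrom t f x) (hy : IsPrimitiveFrom t g y) :
    IsPrimitiveFrom t (f - g) (x - y) := by
  refine ⟨fun T hT ↦ (hx.integrableOn T hT).sub (hy.integrableOn T hT), fun s hs ↦ ?_⟩
  simp only [Pi.sub_apply]
  rw [intervalIntegral.integral_sub (hx.intervalIntegrable le_rfl hs)
    (hy.intervalIntegrable le_rfl hs), hx.eq_integral s hs, hy.eq_integral s hs, add_sub_add_comm]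

theorem of_hasDerivAt [CompleteSpace E] (hx : ∀ s, HasDerivAt x (f s) s) (hf : Continuous f) :
    IsPrimitiveFrom t f x := by
  refine ⟨fun T _ ↦ hf.continuousOn.integrableOn_Icc, fun s _ ↦ ?_⟩
  rw [integral_eq_sub_of_hasDerivAt (fun r _ ↦ hx r) (hf.intervalIntegrable _ _), add_sub_cancel]

theorem exp_smul [CompleteSpace E] (hx : IsPrimitiveFrom t f x) (a : ℝ) :
    IsPrimitiveFrom t (fun s ↦ Real.exp (a * s) • (f s + a • x s))
      fun s ↦ Real.exp (a * s) • x s := by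
  have hexp : IsPrimitiveFrom t (fun s ↦ Real.exp (a * s) * a) fun s ↦ Real.exp (a * s) :=
    .of_hasDerivAt (fun s ↦ ((hasDerivAt_id s).const_mul a).exp.congr_deriv (by simp))
      (by fun_prop)
  refine (hexp.bilin (ContinuousLinearMap.lsmul ℝ ℝ) hx).congr_deriv (.of_forall fun s ↦ ?_)
  simp only [ContinuousLinearMap.lsmul_apply, smul_add, smul_smul]

theorem integral_deriv (h : IsPrimitiveFrom t f x) (hf : IntegrableOn f (Ici t))
    (hx : IntegrableOn x (Ici t)) : ∫ s in Ici t, f s = -x t := by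
  rw [integrableOn_Ici_iff_integrableOn_Ioi] at hf
  have hlim : Tendsto x atTop (𝓝 (x t + ∫ s in Ioi t, f s)) :=
    ((intervalIntegral_tendsto_integral_Ioi t hf tendsto_id).const_add (x t)).congr' <| by
      filter_upwards [eventually_ge_atTop t] with s hs using (h.eq_integral s hs).symm
  have hzero : x t + ∫ s in Ioi t, f s = 0 := by
    refine IntegrableAtFilter.eq_zero_of_tendsto (μ := volume)
      ⟨Ici t, Ici_mem_atTop t, hx⟩ (fun s hs ↦ ?_) hlim
    obtain ⟨r, hr⟩ := mem_atTop_sets.1 hs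
    exact top_unique ((Real.volume_Ici (a := r)).symm.le.trans (measure_mono hr))
  rw [integral_Ici_eq_integral_Ioi, eq_neg_iff_add_eq_zero, add_comm, hzero]

end IsPrimitiveFrom

end Primitive

section Energy

open Set Filter Topology
open scoped InnerProductSpace

theorem integrable_sq_norm_of_memLp_two {E α : Type*} [NormedAddCommGroup E]
    {_ : MeasurableSpace α} {μ : Measure α} {f : α → E} (hf : MemLp f 2 μ) :
    Integrable (fun s ↦ ‖f s‖ ^ 2) μ :=
  (memLp_two_iff_integrable_sq_norm hf.1).1 hf

theorem integrableOn_Icc_of_memLp_two {E : Type*} [NormedAddCommGroup E] {t : ℝ}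
    {f : ℝ → E} (hf : MemLp f 2 (volume.restrict (Ici t))) (T : ℝ) :
    IntegrableOn f (Icc t T) :=
  (hf.mono_measure (Measure.restrict_mono Icc_subset_Ici_self le_rfl)).integrable one_le_two

variable {E : Type*} [NormedAddCommGroup E] [InnerProductSpace ℝ E]

theorem integrable_inner_of_memLp_two {α : Type*} {_ : MeasurableSpace α} {μ : Measure α}
    {f g : α → E} (hf : MemLp f 2 μ) (hg : MemLp g 2 μ) :
    Integrable (fun s ↦ ⟪f s, g s⟫_ℝ) μ :=
  memLp_one_iff_integrable.1 ((innerSL ℝ).memLp_of_bilin 1 hf hg)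

theorem lp_norm_sq_eq_integral {α : Type*} {_ : MeasurableSpace α} {μ : Measure α} (F : Lp E 2 μ) :
    ‖F‖ ^ 2 = ∫ s, ‖F s‖ ^ 2 ∂μ := by
  rw [← real_inner_self_eq_norm_sq, L2.inner_def]
  simp only [real_inner_self_eq_norm_sq]

theorem setIntegral_Ici_le_of_intervalIntegral_le {t C : ℝ} {φ : ℝ → ℝ}
    (hφ : IntegrableOn φ (Ici t)) (hC : ∀ T, t ≤ T → ∫ s in t..T, φ s ≤ C) :
    ∫ s in Ici t, φ s ≤ C := by
  rw [integral_Ici_eq_integral_Ioi]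
  refine le_of_tendsto (intervalIntegral_tendsto_integral_Ioi t (hφ.mono_set Ioi_subset_Ici_self)
    tendsto_id) ?_
  filter_upwards [eventually_ge_atTop t] with T hT using hC T hT

theorem intervalIntegral_le_setIntegral_Ici {t T : ℝ} {φ : ℝ → ℝ} (hT : t ≤ T)
    (hφ : IntegrableOn φ (Ici t)) (h0 : ∀ s, 0 ≤ φ s) :
    ∫ s in t..T, φ s ≤ ∫ s in Ici t, φ s := by
  rw [intervalIntegral.integral_of_le hT]
  exact setIntegral_mono_set hφ (.of_forall h0)
    (Ioc_subset_Icc_self.trans Icc_subset_Ici_self).eventuallyLE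

theorem mul_norm_sq_le_sub_inner {ω ε : ℝ} (hω : 0 < ω) (hε : ε ^ 2 = 1) (f x : E) :
    ω * ‖x‖ ^ 2 ≤
      ω⁻¹ * ‖f‖ ^ 2 + -ε * (⟪x, ε • (f - ω • x)⟫_ℝ + ⟪ε • (f - ω • x), x⟫_ℝ) := by
  have hsq : ω⁻¹ * ‖f - ω • x‖ ^ 2 = ω⁻¹ * ‖f‖ ^ 2 - 2 * ⟪f, x⟫_ℝ + ω * ‖x‖ ^ 2 := by
    rw [norm_sub_sq_real, inner_smul_right, norm_smul, Real.norm_of_nonneg hω.le]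
    field_simp
  have hcross : -ε * (⟪x, ε • (f - ω • x)⟫_ℝ + ⟪ε • (f - ω • x), x⟫_ℝ) =
      2 * ω * ‖x‖ ^ 2 - 2 * ⟪f, x⟫_ℝ := by
    rw [real_inner_comm, ← two_mul, real_inner_smul_left, inner_sub_left, real_inner_smul_left,
      real_inner_self_eq_norm_sq]
    linear_combination (2 * ω * ‖x‖ ^ 2 - 2 * ⟪f, x⟫_ℝ) * hε
  have hnonneg : 0 ≤ ω⁻¹ * ‖f - ω • x‖ ^ 2 := by positivity
  linarith

variable {t ω C : ℝ} {f g x y : ℝ → E}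

namespace IsPrimitiveFrom

theorem memLp_two (hx : IsPrimitiveFrom t f x) (hC : ∀ T, t ≤ T → ∫ s in t..T, ‖x s‖ ^ 2 ≤ C) :
    MemLp x 2 (volume.restrict (Ici t)) := by
  have hmeas := hx.aestronglyMeasurable
  refine (memLp_two_iff_integrable_sq_norm hmeas).2 ?_
  rw [← IntegrableOn, integrableOn_Ici_iff_integrableOn_Ioi]
  refine integrableOn_Ioi_of_intervalIntegral_norm_bounded (b := id) C t (fun T ↦ ?_) tendsto_id ?_
  · rcases le_total t T with hT | hT
    · exact (((hx.continuousOn hT).norm.pow 2).integrableOn_Icc).mono_set Ioc_subset_Icc_self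
    · simp [Ioc_eq_empty_of_le hT]
  · filter_upwards [eventually_ge_atTop t] with T hT
    simpa using hC T hT

variable [CompleteSpace E]

theorem inner (hx : IsPrimitiveFrom t f x) (hy : IsPrimitiveFrom t g y) :
    IsPrimitiveFrom t (fun s ↦ ⟪x s, g s⟫_ℝ + ⟪f s, y s⟫_ℝ) fun s ↦ ⟪x s, y s⟫_ℝ :=
  hx.bilin (innerSL ℝ) hy

theorem integral_inner (hx : IsPrimitiveFrom t f x) (hy : IsPrimitiveFrom t g y)
    (hx2 : MemLp x 2 (volume.restrict (Ici t))) (hf2 : MemLp f 2 (volume.restrict (Ici t)))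
    (hy2 : MemLp y 2 (volume.restrict (Ici t))) (hg2 : MemLp g 2 (volume.restrict (Ici t))) :
    ∫ s in Ici t, (⟪x s, g s⟫_ℝ + ⟪f s, y s⟫_ℝ) = -⟪x t, y t⟫_ℝ :=
  (hx.inner hy).integral_deriv
    ((integrable_inner_of_memLp_two hx2 hg2).add (integrable_inner_of_memLp_two hf2 hy2))
    (integrable_inner_of_memLp_two hx2 hy2)

theorem two_mul_integral_inner (hx : IsPrimitiveFrom t f x)
    (hx2 : MemLp x 2 (volume.restrict (Ici t))) (hf2 : MemLp f 2 (volume.restrict (Ici t))) :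
    2 * ∫ s in Ici t, ⟪f s, x s⟫_ℝ = -‖x t‖ ^ 2 := by
  rw [← real_inner_self_eq_norm_sq, ← hx.integral_inner hx hx2 hf2 hx2 hf2, ← integral_const_mul]
  congr with s
  rw [real_inner_comm, two_mul]

/-- The sign `ε = 1` is the forward equation `x' = f - ω x`, the sign `ε = -1` the backward equation
`x' = -(f - ω x)`. -/
theorem energy_estimate (hω : 0 < ω) {ε : ℝ} (hε : ε ^ 2 = 1)
    (hx : IsPrimitiveFrom t (fun s ↦ ε • (f s - ω • x s)) x)
    (hf : MemLp f 2 (volume.restrict (Ici t))) {T : ℝ} (hT : t ≤ T) :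
    ω * ∫ s in t..T, ‖x s‖ ^ 2 ≤
      ω⁻¹ * (∫ s in Ici t, ‖f s‖ ^ 2) + ε * (‖x t‖ ^ 2 - ‖x T‖ ^ 2) := by
  have hf2 : IntegrableOn (fun s ↦ ‖f s‖ ^ 2) (Ici t) := integrable_sq_norm_of_memLp_two hf
  have hfT : IntervalIntegrable (fun s ↦ ‖f s‖ ^ 2) volume t T :=
    (intervalIntegrable_iff_integrableOn_Icc_of_le hT).2 (hf2.mono_set Icc_subset_Ici_self)
  have hxT : IntervalIntegrable (fun s ↦ ‖x s‖ ^ 2) volume t T :=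
    ((hx.continuousOn hT).norm.pow 2).intervalIntegrable_of_Icc hT
  have hd := ((hx.inner hx).intervalIntegrable le_rfl hT).const_mul (-ε)
  have hnorm := (hx.inner hx).sub_eq_integral le_rfl hT
  rw [real_inner_self_eq_norm_sq, real_inner_self_eq_norm_sq] at hnorm
  calc ω * ∫ s in t..T, ‖x s‖ ^ 2
      = ∫ s in t..T, ω * ‖x s‖ ^ 2 := (intervalIntegral.integral_const_mul _ _).symm
    _ ≤ _ := intervalIntegral.integral_mono_on hT (hxT.const_mul _) ((hfT.const_mul _).add hd)
        fun s _ ↦ mul_norm_sq_le_sub_inner hω hε (f s) (x s)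
    _ = ω⁻¹ * (∫ s in t..T, ‖f s‖ ^ 2) + ε * (‖x t‖ ^ 2 - ‖x T‖ ^ 2) := by
        rw [intervalIntegral.integral_add (hfT.const_mul _) hd,
          intervalIntegral.integral_const_mul, intervalIntegral.integral_const_mul, ← hnorm]
        ring
    _ ≤ _ := by
        gcongr
        exact intervalIntegral_le_setIntegral_Ici hT hf2 fun s ↦ by positivity

end IsPrimitiveFrom

end Energy

section Resolvent

open Set Filter Topology
open scoped InnerProductSpace InnerProduct

theorem integrableOn_Icc_exp_smul {E : Type*} [NormedAddCommGroup E] [NormedSpace ℝ E] {t T : ℝ}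
    {f : ℝ → E} (hf : IntegrableOn f (Icc t T)) (a : ℝ) :
    IntegrableOn (fun s ↦ Real.exp (a * s) • f s) (Icc t T) :=
  hf.continuousOn_smul (by fun_prop) isCompact_Icc

/-- The space `L²(t, ∞; E)`. -/
abbrev HalfLineL2 (t : ℝ) (E : Type*) [NormedAddCommGroup E] : Type _ :=
  Lp E 2 (volume.restrict (Ici t))

/-- The solution `x` of `x' = f - ω x`, `x t = x₀`, given by the variation of constants formula. -/
noncomputable def forwardSol {E : Type*} [NormedAddCommGroup E] [NormedSpace ℝ E] (t ω : ℝ) (x₀ : E)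
    (f : ℝ → E) (s : ℝ) : E :=
  Real.exp (-ω * s) • (Real.exp (ω * t) • x₀ + ∫ r in t..s, Real.exp (ω * r) • f r)

/-- The solution `y` of `y' = -(g - ω y)` that vanishes at infinity. -/
noncomputable def backwardSol {E : Type*} [NormedAddCommGroup E] [NormedSpace ℝ E] (ω : ℝ)
    (g : ℝ → E) (s : ℝ) : E :=
  Real.exp (ω * s) • ∫ r in Ioi s, Real.exp (-ω * r) • g r

variable {E : Type*} [NormedAddCommGroup E] [InnerProductSpace ℝ E] {t ω : ℝ} {f g : ℝ → E}

theorem forwardSol_self (x₀ : E) : forwardSol t ω x₀ f t = x₀ := by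
  simp [forwardSol, smul_smul, ← Real.exp_add]

theorem forwardSol_congr (hfg : f =ᵐ[volume.restrict (Ici t)] g) (x₀ : E) {s : ℝ} (hs : t ≤ s) :
    forwardSol t ω x₀ f s = forwardSol t ω x₀ g s := by
  unfold forwardSol
  congr 2
  refine intervalIntegral.integral_congr_ae_restrict ?_
  rw [uIoc_of_le hs]
  filter_upwards [ae_restrict_of_ae_restrict_of_subset
    (Ioc_subset_Icc_self.trans Icc_subset_Ici_self) hfg] with r hr
  rw [hr]

theorem forwardSol_add (hf : MemLp f 2 (volume.restrict (Ici t)))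
    (hg : MemLp g 2 (volume.restrict (Ici t))) (x₀ y₀ : E) {s : ℝ} (hs : t ≤ s) :
    forwardSol t ω (x₀ + y₀) (f + g) s = forwardSol t ω x₀ f s + forwardSol t ω y₀ g s := by
  have hint {h : ℝ → E} (hh : MemLp h 2 (volume.restrict (Ici t))) :
      IntervalIntegrable (fun r ↦ Real.exp (ω * r) • h r) volume t s :=
    (intervalIntegrable_iff_integrableOn_Icc_of_le hs).2
      (integrableOn_Icc_exp_smul (integrableOn_Icc_of_memLp_two hh s) ω)
  simp only [forwardSol, Pi.add_apply, smul_add]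
  rw [intervalIntegral.integral_add (hint hf) (hint hg), smul_add]
  abel

theorem forwardSol_smul (c : ℝ) (x₀ : E) (s : ℝ) :
    forwardSol t ω (c • x₀) (c • f) s = c • forwardSol t ω x₀ f s := by
  simp only [forwardSol, Pi.smul_apply, smul_comm _ c, intervalIntegral.integral_smul, ← smul_add]

theorem integrableOn_Ioi_exp_smul (hω : 0 < ω) (hg : MemLp g 2 (volume.restrict (Ici t))) :
    IntegrableOn (fun r ↦ Real.exp (-ω * r) • g r) (Ioi t) := by
  have hexp : MemLp (fun r ↦ Real.exp (-ω * r)) 2 (volume.restrict (Ioi t)) := by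
    refine (memLp_two_iff_integrable_sq (by fun_prop)).2 ?_
    refine (integrableOn_exp_mul_Ioi (a := -(2 * ω)) (by linarith) t).congr_fun (fun r _ ↦ ?_)
      measurableSet_Ioi
    rw [← Real.exp_nat_mul]
    push_cast
    ring_nf
  exact memLp_one_iff_integrable.1 <| (ContinuousLinearMap.lsmul ℝ ℝ).memLp_of_bilin 1 hexp
    (hg.mono_measure (Measure.restrict_mono Ioi_subset_Ici_self le_rfl))

theorem norm_backwardSol_le (hω : 0 < ω) (hg : MemLp g 2 (volume.restrict (Ici t))) {s : ℝ}
    (hs : t ≤ s) : ‖backwardSol ω g s‖ ≤ ω⁻¹ + ∫ r in Ici t, ‖g r‖ ^ 2 := by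
  have hexp : IntegrableOn (fun r ↦ Real.exp (-ω * r)) (Ioi s) :=
    integrableOn_exp_mul_Ioi (by linarith) s
  have hg2 : IntegrableOn (fun r ↦ ‖g r‖ ^ 2) (Ici t) := integrable_sq_norm_of_memLp_two hg
  have hIoi : Ioi s ⊆ Ici t := fun r hr ↦ hs.trans (le_of_lt hr)
  have hpt : ∀ r ∈ Ioi s, ‖Real.exp (-ω * r) • g r‖ ≤
      Real.exp (-ω * r) + Real.exp (-ω * s) * ‖g r‖ ^ 2 := fun r hr ↦ by
    rw [norm_smul, Real.norm_of_nonneg (Real.exp_nonneg _)]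
    calc Real.exp (-ω * r) * ‖g r‖
        ≤ Real.exp (-ω * r) * (1 + ‖g r‖ ^ 2) := by gcongr; nlinarith [sq_nonneg (‖g r‖ - 1)]
      _ = Real.exp (-ω * r) + Real.exp (-ω * r) * ‖g r‖ ^ 2 := by ring
      _ ≤ _ := by
        gcongr Real.exp _ + Real.exp ?_ * _
        nlinarith [mem_Ioi.1 hr]
  calc ‖backwardSol ω g s‖
      = Real.exp (ω * s) * ‖∫ r in Ioi s, Real.exp (-ω * r) • g r‖ := by
        rw [backwardSol, norm_smul, Real.norm_of_nonneg (Real.exp_nonneg _)]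
    _ ≤ Real.exp (ω * s) *
          ∫ r in Ioi s, (Real.exp (-ω * r) + Real.exp (-ω * s) * ‖g r‖ ^ 2) := by
        gcongr
        exact norm_integral_le_of_norm_le (hexp.add ((hg2.mono_set hIoi).const_mul _))
          (ae_restrict_of_forall_mem measurableSet_Ioi hpt)
    _ = ω⁻¹ + ∫ r in Ioi s, ‖g r‖ ^ 2 := by
        rw [integral_add hexp ((hg2.mono_set hIoi).const_mul _), integral_const_mul,
          integral_exp_mul_Ioi (by linarith), neg_mul, Real.exp_neg]
        have := Real.exp_ne_zero (ω * s)
        field_simp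
    _ ≤ _ := by
        gcongr
        exact .of_forall fun r ↦ by positivity

variable [CompleteSpace E]

theorem isPrimitiveFrom_forwardSol (hf : MemLp f 2 (volume.restrict (Ici t))) (x₀ : E) :
    IsPrimitiveFrom t (fun s ↦ f s - ω • forwardSol t ω x₀ f s) (forwardSol t ω x₀ f) := by
  refine ((isPrimitiveFrom_integral (fun T _ ↦ integrableOn_Icc_exp_smul
    (integrableOn_Icc_of_memLp_two hf T) ω) (Real.exp (ω * t) • x₀)).exp_smul (-ω)).congr_deriv
      (.of_forall fun s ↦ ?_)
  simp only [forwardSol, smul_add (Real.exp (-ω * s)) (Real.exp (ω * s) • f s), smul_smul,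
    ← Real.exp_add]
  rw [neg_mul, neg_add_cancel, Real.exp_zero, one_smul, mul_neg, neg_smul, ← sub_eq_add_neg,
    mul_comm]

theorem intervalIntegral_norm_sq_forwardSol_le (hω : 0 < ω)
    (hf : MemLp f 2 (volume.restrict (Ici t))) (x₀ : E) {T : ℝ} (hT : t ≤ T) :
    ω * ∫ s in t..T, ‖forwardSol t ω x₀ f s‖ ^ 2 ≤
      ω⁻¹ * (∫ s in Ici t, ‖f s‖ ^ 2) + ‖x₀‖ ^ 2 := by
  have hprim := isPrimitiveFrom_forwardSol (ω := ω) hf x₀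
  have h := IsPrimitiveFrom.energy_estimate hω (one_pow 2)
    (hprim.congr_deriv (.of_forall fun s ↦ (one_smul ℝ _).symm)) hf hT
  rw [forwardSol_self] at h
  linarith [sq_nonneg ‖forwardSol t ω x₀ f T‖]

theorem memLp_forwardSol (hω : 0 < ω) (hf : MemLp f 2 (volume.restrict (Ici t))) (x₀ : E) :
    MemLp (forwardSol t ω x₀ f) 2 (volume.restrict (Ici t)) :=
  (isPrimitiveFrom_forwardSol hf x₀).memLp_two fun _ hT ↦
    (le_inv_mul_iff₀ hω).2 (intervalIntegral_norm_sq_forwardSol_le hω hf x₀ hT)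

theorem integral_norm_sq_forwardSol_le (hω : 0 < ω) (hf : MemLp f 2 (volume.restrict (Ici t))) :
    ∫ s in Ici t, ‖forwardSol t ω 0 f s‖ ^ 2 ≤ ω⁻¹ ^ 2 * ∫ s in Ici t, ‖f s‖ ^ 2 := by
  refine setIntegral_Ici_le_of_intervalIntegral_le
    (integrable_sq_norm_of_memLp_two (memLp_forwardSol hω hf 0)) fun T hT ↦ ?_
  rw [pow_two, mul_assoc]
  exact (le_inv_mul_iff₀ hω).2 <| by
    simpa using intervalIntegral_norm_sq_forwardSol_le hω hf 0 hT

theorem isPrimitiveFrom_backwardSol (hω : 0 < ω) (hg : MemLp g 2 (volume.restrict (Ici t))) :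
    IsPrimitiveFrom t (fun s ↦ -(g s - ω • backwardSol ω g s)) (backwardSol ω g) := by
  set h := fun r ↦ Real.exp (-ω * r) • g r
  have hh : IntegrableOn h (Ioi t) := integrableOn_Ioi_exp_smul hω hg
  have hprim : IsPrimitiveFrom t (-h) fun s ↦ ∫ r in Ioi s, h r := by
    refine (isPrimitiveFrom_integral (fun T _ ↦ ((integrableOn_Icc_exp_smul
      (integrableOn_Icc_of_memLp_two hg T) (-ω)).neg)) (∫ r in Ioi t, h r)).congr fun s hs ↦ ?_
    rw [← intervalIntegral.integral_interval_add_Ioi hh (hh.mono_set (Ioi_subset_Ioi hs))]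
    simp only [intervalIntegral.integral_neg, Pi.neg_apply, h]
    abel
  refine (hprim.exp_smul ω).congr_deriv (.of_forall fun s ↦ ?_)
  simp only [h, backwardSol, Pi.neg_apply, smul_add, smul_neg, smul_smul, ← Real.exp_add]
  rw [neg_mul, add_neg_cancel, Real.exp_zero, one_smul, mul_comm, neg_sub, neg_add_eq_sub]

theorem memLp_backwardSol (hω : 0 < ω) (hg : MemLp g 2 (volume.restrict (Ici t))) :
    MemLp (backwardSol ω g) 2 (volume.restrict (Ici t)) := by
  have hprim := isPrimitiveFrom_backwardSol hω hg
  refine hprim.memLp_two (C := ω⁻¹ * (ω⁻¹ * (∫ s in Ici t, ‖g s‖ ^ 2) +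
    (ω⁻¹ + ∫ s in Ici t, ‖g s‖ ^ 2) ^ 2)) fun T hT ↦ (le_inv_mul_iff₀ hω).2 ?_
  have h := IsPrimitiveFrom.energy_estimate hω (ε := -1) (by norm_num)
    (hprim.congr_deriv (.of_forall fun s ↦ (neg_one_smul ℝ _).symm)) hg hT
  have hbd := pow_le_pow_left₀ (norm_nonneg _) (norm_backwardSol_le hω hg hT) 2
  linarith [sq_nonneg ‖backwardSol ω g t‖]

theorem integral_inner_forwardSol (hω : 0 < ω) (hf : MemLp f 2 (volume.restrict (Ici t)))
    (hg : MemLp g 2 (volume.restrict (Ici t))) :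
    ∫ s in Ici t, ⟪forwardSol t ω 0 f s, g s⟫_ℝ = ∫ s in Ici t, ⟪f s, backwardSol ω g s⟫_ℝ := by
  have hx := memLp_forwardSol hω hf 0
  have hy := memLp_backwardSol hω hg
  have h := (isPrimitiveFrom_forwardSol (ω := ω) hf 0).integral_inner
    (isPrimitiveFrom_backwardSol hω hg) hx (hf.sub (hx.const_smul ω)) hy
    (hg.sub (hy.const_smul ω)).neg
  rw [forwardSol_self, inner_zero_left, neg_zero] at h
  rw [eq_comm, ← sub_eq_zero, ← h, ← integral_sub (integrable_inner_of_memLp_two hf hy)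
    (integrable_inner_of_memLp_two hx hg)]
  refine integral_congr_ae (.of_forall fun s ↦ ?_)
  simp only [inner_neg_right, inner_sub_right, inner_sub_left, real_inner_smul_left,
    real_inner_smul_right]
  ring

/-- The resolvent `(∂ₜ + ω)⁻¹` of the time derivative on `L²(t, ∞; E)`, with zero initial value. -/
noncomputable def forwardResolvent (t : ℝ) (hω : 0 < ω) : HalfLineL2 t E →L[ℝ] HalfLineL2 t E :=
  LinearMap.mkContinuous
    { toFun F := (memLp_forwardSol hω (Lp.memLp F) 0).toLp
      map_add' F G := by
        rw [← MemLp.toLp_add, MemLp.toLp_eq_toLp_iff]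
        filter_upwards [ae_restrict_mem measurableSet_Ici] with s hs
        rw [forwardSol_congr (Lp.coeFn_add F G) 0 hs, Pi.add_apply,
          ← forwardSol_add (Lp.memLp F) (Lp.memLp G) 0 0 hs, add_zero]
      map_smul' c F := by
        rw [RingHom.id_apply, ← MemLp.toLp_const_smul, MemLp.toLp_eq_toLp_iff]
        filter_upwards [ae_restrict_mem measurableSet_Ici] with s hs
        rw [forwardSol_congr (Lp.coeFn_smul c F) 0 hs, Pi.smul_apply, ← forwardSol_smul,
          smul_zero] }
    ω⁻¹ fun F ↦ by
      refine le_of_sq_le_sq ?_ (by positivity)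
      rw [mul_pow, lp_norm_sq_eq_integral, lp_norm_sq_eq_integral]
      refine (integral_congr_ae ?_).trans_le (integral_norm_sq_forwardSol_le hω (Lp.memLp F))
      filter_upwards [MemLp.coeFn_toLp (memLp_forwardSol hω (Lp.memLp F) 0)] with s hs
      exact congr(‖$hs‖ ^ 2)

theorem coeFn_forwardResolvent (hω : 0 < ω) (F : HalfLineL2 t E) :
    ⇑(forwardResolvent t hω F) =ᵐ[volume.restrict (Ici t)] forwardSol t ω 0 F :=
  (memLp_forwardSol hω (Lp.memLp F) 0).coeFn_toLp

theorem norm_forwardResolvent_le (hω : 0 < ω) :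
    ‖(forwardResolvent t hω : HalfLineL2 t E →L[ℝ] HalfLineL2 t E)‖ ≤ ω⁻¹ :=
  LinearMap.mkContinuous_norm_le _ (by positivity) _

theorem coeFn_adjoint_forwardResolvent (hω : 0 < ω) (G : HalfLineL2 t E) :
    (((forwardResolvent t hω)†) G : HalfLineL2 t E) =ᵐ[volume.restrict (Ici t)]
      backwardSol ω G := by
  have hG := memLp_backwardSol hω (Lp.memLp G)
  suffices ((forwardResolvent t hω)†) G = hG.toLp from this ▸ hG.coeFn_toLp
  refine ext_inner_left ℝ fun F ↦ ?_
  rw [ContinuousLinearMap.adjoint_inner_right, L2.inner_def, L2.inner_def]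
  calc ∫ s in Ici t, ⟪forwardResolvent t hω F s, G s⟫_ℝ
      = ∫ s in Ici t, ⟪forwardSol t ω 0 F s, G s⟫_ℝ := integral_congr_ae <| by
        filter_upwards [coeFn_forwardResolvent hω F] with s hs using congr(⟪$hs, G s⟫_ℝ)
    _ = ∫ s in Ici t, ⟪F s, backwardSol ω G s⟫_ℝ :=
        integral_inner_forwardSol hω (Lp.memLp F) (Lp.memLp G)
    _ = ∫ s in Ici t, ⟪F s, hG.toLp _ s⟫_ℝ := integral_congr_ae <| by
        filter_upwards [hG.coeFn_toLp] with s hs using congr(⟪F s, $hs⟫_ℝ).symm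

/-- The free motion `s ↦ exp (-ω (s - t)) x₀`, as an element of `L²(t, ∞; E)`. -/
noncomputable def freeMotion (t : ℝ) (hω : 0 < ω) (x₀ : E) : HalfLineL2 t E :=
  (memLp_forwardSol hω (Lp.memLp (0 : HalfLineL2 t E)) x₀).toLp

theorem exists_isPrimitiveFrom_forwardResolvent (hω : 0 < ω) (F : HalfLineL2 t E) (x₀ : E) :
    ∃ x, x t = x₀ ∧
      x =ᵐ[volume.restrict (Ici t)]
        (forwardResolvent t hω F + freeMotion t hω x₀ : HalfLineL2 t E) ∧
      IsPrimitiveFrom t (fun s ↦ F s - ω • x s) x := by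
  refine ⟨forwardSol t ω x₀ F, forwardSol_self x₀, ?_, isPrimitiveFrom_forwardSol (Lp.memLp F) x₀⟩
  have hF0 : F =ᵐ[volume.restrict (Ici t)] ⇑F + ⇑(0 : HalfLineL2 t E) := by
    simpa only [add_zero] using Lp.coeFn_add F 0
  filter_upwards [Lp.coeFn_add (forwardResolvent t hω F) (freeMotion t hω x₀),
    coeFn_forwardResolvent hω F,
    (memLp_forwardSol hω (Lp.memLp (0 : HalfLineL2 t E)) x₀).coeFn_toLp,
    ae_restrict_mem measurableSet_Ici] with s hadd hF hfree hs
  rw [hadd, Pi.add_apply, hF, freeMotion, hfree, ← forwardSol_add (Lp.memLp F) (Lp.memLp 0) 0 x₀ hs,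
    zero_add, forwardSol_congr hF0 x₀ hs]

theorem exists_isPrimitiveFrom_adjoint_forwardResolvent (hω : 0 < ω) (G : HalfLineL2 t E) :
    ∃ y, y =ᵐ[volume.restrict (Ici t)] (((forwardResolvent t hω)†) G : HalfLineL2 t E) ∧
      IsPrimitiveFrom t (fun s ↦ -(G s - ω • y s)) y :=
  ⟨backwardSol ω G, (coeFn_adjoint_forwardResolvent hω G).symm,
    isPrimitiveFrom_backwardSol hω (Lp.memLp G)⟩

end Resolvent

section OptimalitySystem

open scoped InnerProductSpace InnerProduct

variable {H U : Type*} [NormedAddCommGroup H] [InnerProductSpace ℝ H] [CompleteSpace H]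
  [NormedAddCommGroup U] [InnerProductSpace ℝ U] [CompleteSpace U]

theorem isUnit_of_mul_norm_sq_le_inner {T : U →L[ℝ] U} {c : ℝ} (hc : 0 < c)
    (hT : ∀ v, c * ‖v‖ ^ 2 ≤ ⟪T v, v⟫_ℝ) : IsUnit T :=
  ContinuousLinearMap.isUnit_of_forall_le_norm_inner_map T (c := ⟨c, hc.le⟩) hc fun v ↦ by
    rw [mul_comm]
    exact (hT v).trans (Real.le_norm_self _)

theorem exists_stationary_control (T : U →L[ℝ] H) {Q : H →L[ℝ] H} {R : U →L[ℝ] U} {δ : ℝ}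
    (hδ : 0 < δ) (hQ : ∀ v, 0 ≤ ⟪Q v, v⟫_ℝ) (hR : ∀ v, δ * ‖v‖ ^ 2 ≤ ⟪R v, v⟫_ℝ) (e : H) :
    ∃ u, R u = -(T†) (Q (T u + e)) := by
  have hunit : IsUnit (R + T† ∘L Q ∘L T) := by
    refine isUnit_of_mul_norm_sq_le_inner hδ fun v ↦ ?_
    simp only [_root_.add_apply, ContinuousLinearMap.comp_apply, inner_add_left,
      ContinuousLinearMap.adjoint_inner_left]
    exact le_add_of_le_of_nonneg (hR v) (hQ (T v))
  obtain ⟨u, hu⟩ := (ContinuousLinearMap.isUnit_iff_bijective.1 hunit).surjective (-(T†) (Q e))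
  refine ⟨u, ?_⟩
  simp only [_root_.add_apply, ContinuousLinearMap.comp_apply] at hu
  rw [map_add Q, map_add, neg_add, ← hu]
  abel

/-- With `J` the resolvent of the time derivative, the first equation is the state equation, the
second the adjoint equation and the third the stationarity of a linear-quadratic cost. -/
theorem exists_optimality_system {J M Q : H →L[ℝ] H} {R : U →L[ℝ] U} {δ : ℝ} (B : U →L[ℝ] H)
    (hJM : ‖J * M‖ < 1) (hδ : 0 < δ) (hQ : ∀ v, 0 ≤ ⟪Q v, v⟫_ℝ)
    (hR : ∀ v, δ * ‖v‖ ^ 2 ≤ ⟪R v, v⟫_ℝ) (e : H) :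
    ∃ X Y u, X = J (M X + B u) + e ∧ Y = (J†) ((M†) Y + Q X) ∧ R u = -(B†) Y := by
  obtain ⟨S, hS, hS'⟩ := isUnit_iff_exists.1 (Units.oneSub (J * M) hJM).isUnit
  rw [Units.val_oneSub] at hS hS'
  have hS_apply (v : H) : S v = J (M (S v)) + v := sub_eq_iff_eq_add'.1 congr($hS v)
  have hS_adjoint (v : H) : (S†) v = (M†) ((J†) ((S†) v)) + v := by
    have h : (1 - star M * star J) * star S = 1 := by
      rw [← star_mul, ← star_one (H →L[ℝ] H), ← star_sub, ← star_mul, hS']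
    exact sub_eq_iff_eq_add'.1 congr($h v)
  obtain ⟨u, hu⟩ := exists_stationary_control (S ∘L J ∘L B) hδ hQ hR (S e)
  set X := (S ∘L J ∘L B) u + S e with hX
  refine ⟨X, (J†) ((S†) (Q X)), u, ?_, ?_, ?_⟩
  · have hXS : X = S (J (B u) + e) := by rw [hX, map_add]; rfl
    rw [map_add, add_assoc, hXS]
    exact hS_apply _
  · rw [← hS_adjoint]
  · rwa [ContinuousLinearMap.adjoint_comp, ContinuousLinearMap.adjoint_comp] at hu

end OptimalitySystem

section Multiplication

open scoped InnerProductSpace InnerProduct ENNReal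

variable {α E F : Type*} {_ : MeasurableSpace α} {μ : Measure α}
  [NormedAddCommGroup E] [InnerProductSpace ℝ E] [NormedAddCommGroup F] [InnerProductSpace ℝ F]

/-- Multiplication `f ↦ A f` by an essentially bounded operator-valued function, on `L²`. -/
noncomputable def lpMul {A : α → E →L[ℝ] F} (hA : MemLp A ∞ μ) : Lp E 2 μ →L[ℝ] Lp F 2 μ :=
  (ContinuousLinearMap.id ℝ (E →L[ℝ] F)).holderL μ ∞ 2 2 hA.toLp

theorem coeFn_lpMul {A : α → E →L[ℝ] F} (hA : MemLp A ∞ μ) (f : Lp E 2 μ) :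
    lpMul hA f =ᵐ[μ] fun s ↦ A s (f s) := by
  rw [lpMul, ContinuousLinearMap.holderL_apply_apply]
  filter_upwards [(ContinuousLinearMap.id ℝ (E →L[ℝ] F)).coeFn_holder (r := 2) hA.toLp f,
    hA.coeFn_toLp] with s hs hAs
  rw [hs, hAs, ContinuousLinearMap.id_apply]

theorem norm_lpMul_le {A : α → E →L[ℝ] F} (hA : MemLp A ∞ μ) {c : ℝ} (hc : 0 ≤ c)
    (hAc : ∀ᵐ s ∂μ, ‖A s‖ ≤ c) : ‖lpMul hA‖ ≤ c := by
  refine ContinuousLinearMap.opNorm_le_bound _ hc fun f ↦ Lp.norm_le_mul_norm_of_ae_le_mul ?_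
  filter_upwards [coeFn_lpMul hA f, hAc] with s hs hsc
  rw [hs]
  exact (A s).le_of_opNorm_le hsc _

theorem mul_norm_sq_le_inner_lpMul {A : α → E →L[ℝ] E} (hA : MemLp A ∞ μ) {c : ℝ}
    (hAc : ∀ᵐ s ∂μ, ∀ v, c * ‖v‖ ^ 2 ≤ ⟪A s v, v⟫_ℝ) (f : Lp E 2 μ) :
    c * ‖f‖ ^ 2 ≤ ⟪lpMul hA f, f⟫_ℝ := by
  rw [lp_norm_sq_eq_integral, L2.inner_def, ← integral_const_mul]
  refine integral_mono_ae ((integrable_sq_norm_of_memLp_two (Lp.memLp f)).const_mul c)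
    (L2.integrable_inner _ _) ?_
  filter_upwards [coeFn_lpMul hA f, hAc] with s hs hsc
  rw [hs]
  exact hsc _

variable [CompleteSpace E] [CompleteSpace F]

theorem memLp_adjoint {A : α → E →L[ℝ] F} {p : ℝ≥0∞} (hA : MemLp A p μ) :
    MemLp (fun s ↦ (A s)†) p μ :=
  hA.of_le (ContinuousLinearMap.adjoint.continuous.comp_aestronglyMeasurable hA.1)
    (.of_forall fun s ↦ (LinearIsometryEquiv.norm_map _ (A s)).le)

theorem adjoint_lpMul {A : α → E →L[ℝ] F} (hA : MemLp A ∞ μ) :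
    (lpMul hA)† = lpMul (memLp_adjoint hA) := by
  refine ((ContinuousLinearMap.eq_adjoint_iff _ _).2 fun f g ↦ ?_).symm
  rw [L2.inner_def, L2.inner_def]
  refine integral_congr_ae ?_
  filter_upwards [coeFn_lpMul hA g, coeFn_lpMul (memLp_adjoint hA) f] with s hg hf
  rw [hg, hf, ContinuousLinearMap.adjoint_inner_left]

end Multiplication

section Cocoercive

open scoped InnerProductSpace InnerProduct

variable {H U : Type*} [NormedAddCommGroup H] [InnerProductSpace ℝ H]
  [NormedAddCommGroup U] [InnerProductSpace ℝ U] {T : H →L[ℝ] H} {c δ L κ ω : ℝ}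

/-- Cocoercivity with constant `c`: the quadratic form of `T` controls the norm of `T v`. -/
def IsCocoercive (c : ℝ) (T : H →L[ℝ] H) : Prop :=
  ∀ v, ‖T v‖ ^ 2 ≤ c * ⟪T v, v⟫_ℝ

theorem IsCocoercive.inner_nonneg (hT : IsCocoercive c T) (hc : 0 ≤ c) (v : H) :
    0 ≤ ⟪T v, v⟫_ℝ :=
  (norm_nonneg (T v)).eq_or_lt.elim (fun h0 ↦ by simp [norm_eq_zero.1 h0.symm])
    fun hpos ↦ (pos_of_mul_pos_right ((pow_pos hpos 2).trans_le (hT v)) hc).le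

theorem IsCocoercive.mono (hT : IsCocoercive c T) (hc : 0 ≤ c) {d : ℝ} (hcd : c ≤ d) :
    IsCocoercive d T :=
  fun v ↦ (hT v).trans (mul_le_mul_of_nonneg_right hcd (hT.inner_nonneg hc v))

theorem IsCocoercive.norm_apply_le (hT : IsCocoercive c T) (hc : 0 ≤ c) (v : H) :
    ‖T v‖ ≤ c * ‖v‖ := by
  rcases (norm_nonneg (T v)).eq_or_lt with h0 | hpos
  · exact h0 ▸ by positivity
  · refine le_of_mul_le_mul_left ?_ hpos
    calc ‖T v‖ * ‖T v‖ ≤ c * ⟪T v, v⟫_ℝ := (sq ‖T v‖).symm.trans_le (hT v)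
      _ ≤ c * (‖T v‖ * ‖v‖) := by gcongr; exact real_inner_le_norm _ _
      _ = ‖T v‖ * (c * ‖v‖) := by ring

/-- Cauchy–Schwarz for the semi-inner product `⟪T v, w⟫`, applied to `v` and `T v`. -/
theorem isCocoercive_of_isPositive (hT : T.IsPositive) (hL : ‖T‖ ≤ L) : IsCocoercive L T := by
  intro v
  have hsymm : ⟪T (T v), v⟫_ℝ = ⟪T v, T v⟫_ℝ := hT.inner_left_eq_inner_right _ _
  have hCS := LinearMap.BilinForm.apply_mul_apply_le_of_forall_zero_le
    (innerₗ H ∘ₗ T.toLinearMap) hT.inner_nonneg_left v (T v)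
  simp only [LinearMap.comp_apply, ContinuousLinearMap.coe_coe, innerₗ_apply_apply, hsymm,
    real_inner_self_eq_norm_sq] at hCS
  rcases (sq_nonneg ‖T v‖).eq_or_lt with h0 | hpos
  · rw [← h0]
    exact mul_nonneg ((norm_nonneg T).trans hL) (hT.inner_nonneg_left v)
  · refine le_of_mul_le_mul_right ?_ hpos
    calc ‖T v‖ ^ 2 * ‖T v‖ ^ 2 ≤ ⟪T v, v⟫_ℝ * ⟪T (T v), T v⟫_ℝ := hCS
      _ ≤ ⟪T v, v⟫_ℝ * (L * ‖T v‖ ^ 2) := by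
        gcongr
        · exact hT.inner_nonneg_left v
        · rw [sq, ← mul_assoc]
          exact (real_inner_le_norm _ _).trans (by gcongr; exact T.le_of_opNorm_le hL _)
      _ = L * ⟪T v, v⟫_ℝ * ‖T v‖ ^ 2 := by ring

theorem opNorm_add_smul_id_le (hL : ‖T‖ ≤ L) (hω : 0 ≤ ω)
    (hT : ∀ v, ⟪T v, v⟫_ℝ ≤ -κ * ‖v‖ ^ 2) :
    ‖T + ω • ContinuousLinearMap.id ℝ H‖ ≤ √(L ^ 2 - 2 * ω * κ + ω ^ 2) := by
  refine ContinuousLinearMap.opNorm_le_bound _ (Real.sqrt_nonneg _) fun v ↦ ?_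
  rw [← Real.sqrt_sq (norm_nonneg v), ← Real.sqrt_mul' _ (sq_nonneg _)]
  refine Real.le_sqrt_of_sq_le ?_
  have hTv : ‖T v‖ ^ 2 ≤ L ^ 2 * ‖v‖ ^ 2 := by
    rw [← mul_pow]
    exact pow_le_pow_left₀ (norm_nonneg _) (T.le_of_opNorm_le hL v) 2
  calc ‖T v + ω • v‖ ^ 2 = ‖T v‖ ^ 2 + 2 * ω * ⟪T v, v⟫_ℝ + ω ^ 2 * ‖v‖ ^ 2 := by
        rw [norm_add_sq_real, real_inner_smul_right, norm_smul, mul_pow, Real.norm_eq_abs, sq_abs]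
        ring
    _ ≤ L ^ 2 * ‖v‖ ^ 2 + 2 * ω * (-κ * ‖v‖ ^ 2) + ω ^ 2 * ‖v‖ ^ 2 := by
        gcongr
        exact hT v
    _ = (L ^ 2 - 2 * ω * κ + ω ^ 2) * ‖v‖ ^ 2 := by ring

theorem mul_norm_sq_le_of_inner_le (hκ : 0 < κ) {p v : H} (q : H)
    (hp : ⟪p, v⟫_ℝ ≤ -κ * ‖v‖ ^ 2) :
    κ * ‖v‖ ^ 2 ≤ -2 * ⟪p - q, v⟫_ℝ + κ⁻¹ * ‖q‖ ^ 2 := by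
  have hsq : κ⁻¹ * ‖q + κ • v‖ ^ 2 = κ⁻¹ * ‖q‖ ^ 2 + 2 * ⟪q, v⟫_ℝ + κ * ‖v‖ ^ 2 := by
    rw [norm_add_sq_real, real_inner_smul_right, norm_smul, Real.norm_of_nonneg hκ.le]
    field_simp
  have hnonneg : 0 ≤ κ⁻¹ * ‖q + κ • v‖ ^ 2 := by positivity
  rw [inner_sub_left]
  linarith

variable [CompleteSpace H] [CompleteSpace U]

/-- The operator `B R⁻¹ B†`. -/
noncomputable def controlGramian (B : U →L[ℝ] H) (R : U →L[ℝ] U) : H →L[ℝ] H :=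
  B ∘L Ring.inverse R ∘L B†

theorem isCocoercive_controlGramian {B : U →L[ℝ] H} {R : U →L[ℝ] U} (hδ : 0 < δ) (hB : ‖B‖ ≤ L)
    (hR : ∀ v, δ * ‖v‖ ^ 2 ≤ ⟪R v, v⟫_ℝ) : IsCocoercive (L ^ 2 / δ) (controlGramian B R) := by
  intro v
  set w := Ring.inverse R ((B†) v)
  have hRw : R w = (B†) v :=
    congr($(Ring.mul_inverse_cancel R (isUnit_of_mul_norm_sq_le_inner hδ hR)) ((B†) v))
  have hinner : ⟪controlGramian B R v, v⟫_ℝ = ⟪R w, w⟫_ℝ := by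
    rw [hRw, ContinuousLinearMap.adjoint_inner_left, real_inner_comm]
    rfl
  calc ‖B w‖ ^ 2 ≤ (L * ‖w‖) ^ 2 := by gcongr; exact B.le_of_opNorm_le hB w
    _ = L ^ 2 / δ * (δ * ‖w‖ ^ 2) := by field_simp
    _ ≤ L ^ 2 / δ * ⟪controlGramian B R v, v⟫_ℝ := by
      rw [hinner]
      gcongr
      exact hR w

end Cocoercive

section Hamiltonian

open Set
open scoped InnerProductSpace InnerProduct ENNReal

variable {H U : Type*} [NormedAddCommGroup H] [InnerProductSpace ℝ H] [CompleteSpace H]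
  {t L κ c : ℝ}

/-- `(x, y)` is a square-integrable solution on `[t, ∞)` of the Hamiltonian system
`x' = A x - G y`, `y' = -(Q x + A† y)`, the equations being understood in the integral sense. -/
structure IsHamiltonianPair (t : ℝ) (A G Q : ℝ → H →L[ℝ] H) (x y : ℝ → H) : Prop where
  forward : IsPrimitiveFrom t (fun s ↦ A s (x s) - G s (y s)) x
  backward : IsPrimitiveFrom t (fun s ↦ -(Q s (x s) + ((A s)†) (y s))) y
  memLp_fst : MemLp x 2 (volume.restrict (Ici t))
  memLp_snd : MemLp y 2 (volume.restrict (Ici t))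

theorem isHamiltonianPair_iff {A G Q : ℝ → H →L[ℝ] H} {x y : ℝ → H} :
    IsHamiltonianPair t A G Q x y ↔ IsPrimitiveFrom t (fun s ↦ A s (x s) - G s (y s)) x ∧
      IsPrimitiveFrom t (fun s ↦ -(Q s (x s) + ((A s)†) (y s))) y ∧
      MemLp x 2 (volume.restrict (Ici t)) ∧ MemLp y 2 (volume.restrict (Ici t)) :=
  ⟨fun h ↦ ⟨h.forward, h.backward, h.memLp_fst, h.memLp_snd⟩,
    fun ⟨hx, hy, hx2, hy2⟩ ↦ ⟨hx, hy, hx2, hy2⟩⟩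

/-- The coefficients of a Hamiltonian system with bounded `A` satisfying `A + A† ≤ -2κ` and with
`c`-cocoercive `G` and `Q`, for almost every `s ≥ t`. -/
structure IsDissipativeHamiltonian (t L κ c : ℝ) (A G Q : ℝ → H →L[ℝ] H) : Prop where
  norm_le : ∀ᵐ s ∂volume.restrict (Ici t), ‖A s‖ ≤ L
  inner_le : ∀ᵐ s ∂volume.restrict (Ici t), ∀ v, ⟪A s v, v⟫_ℝ ≤ -κ * ‖v‖ ^ 2
  isCocoercive_left : ∀ᵐ s ∂volume.restrict (Ici t), IsCocoercive c (G s)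
  isCocoercive_right : ∀ᵐ s ∂volume.restrict (Ici t), IsCocoercive c (Q s)

theorem neg_inner_add_inner_eq (A G Q : H →L[ℝ] H) (x y : H) :
    -(⟪x, -(Q x + (A†) y)⟫_ℝ + ⟪A x - G y, y⟫_ℝ) = ⟪Q x, x⟫_ℝ + ⟪G y, y⟫_ℝ := by
  rw [inner_neg_right, inner_add_right, inner_sub_left, ContinuousLinearMap.adjoint_inner_right,
    real_inner_comm]
  ring

variable {A G Q : ℝ → H →L[ℝ] H} {x y x₁ y₁ x₂ y₂ : ℝ → H}

namespace IsHamiltonianPair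

theorem sub (h₁ : IsHamiltonianPair t A G Q x₁ y₁) (h₂ : IsHamiltonianPair t A G Q x₂ y₂) :
    IsHamiltonianPair t A G Q (x₁ - x₂) (y₁ - y₂) where
  forward := (h₁.forward.sub h₂.forward).congr_deriv <| .of_forall fun s ↦ by
    simp only [Pi.sub_apply, map_sub]
    abel
  backward := (h₁.backward.sub h₂.backward).congr_deriv <| .of_forall fun s ↦ by
    simp only [Pi.sub_apply, map_sub]
    abel
  memLp_fst := h₁.memLp_fst.sub h₂.memLp_fst
  memLp_snd := h₁.memLp_snd.sub h₂.memLp_snd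

theorem memLp_forward (h : IsHamiltonianPair t A G Q x y)
    (hS : IsDissipativeHamiltonian t L κ c A G Q) (hc : 0 ≤ c) :
    MemLp (fun s ↦ A s (x s) - G s (y s)) 2 (volume.restrict (Ici t)) := by
  refine ((h.memLp_fst.norm.const_mul L).add (h.memLp_snd.norm.const_mul c)).mono'
    h.forward.aestronglyMeasurable_deriv ?_
  filter_upwards [hS.norm_le, hS.isCocoercive_left] with s hA hG
  exact (norm_sub_le _ _).trans
    (add_le_add ((A s).le_of_opNorm_le hA _) (hG.norm_apply_le hc _))

theorem memLp_backward (h : IsHamiltonianPair t A G Q x y)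
    (hS : IsDissipativeHamiltonian t L κ c A G Q) (hc : 0 ≤ c) :
    MemLp (fun s ↦ -(Q s (x s) + ((A s)†) (y s))) 2 (volume.restrict (Ici t)) := by
  refine ((h.memLp_fst.norm.const_mul c).add (h.memLp_snd.norm.const_mul L)).mono'
    h.backward.aestronglyMeasurable_deriv ?_
  filter_upwards [hS.norm_le, hS.isCocoercive_right] with s hA hQ
  rw [norm_neg]
  exact (norm_add_le _ _).trans (add_le_add (hQ.norm_apply_le hc _)
    (((A s)†).le_of_opNorm_le ((LinearIsometryEquiv.norm_map _ (A s)).trans_le hA) _))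

theorem integral_inner_eq (h : IsHamiltonianPair t A G Q x y)
    (hS : IsDissipativeHamiltonian t L κ c A G Q) (hc : 0 ≤ c) :
    ∫ s in Ici t, (⟪Q s (x s), x s⟫_ℝ + ⟪G s (y s), y s⟫_ℝ) = ⟪x t, y t⟫_ℝ := by
  rw [← neg_neg ⟪x t, y t⟫_ℝ, ← h.forward.integral_inner h.backward h.memLp_fst
    (h.memLp_forward hS hc) h.memLp_snd (h.memLp_backward hS hc), ← integral_neg]
  simp only [neg_inner_add_inner_eq]

theorem integrable_inner (h : IsHamiltonianPair t A G Q x y)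
    (hS : IsDissipativeHamiltonian t L κ c A G Q) (hc : 0 ≤ c) :
    IntegrableOn (fun s ↦ ⟪Q s (x s), x s⟫_ℝ + ⟪G s (y s), y s⟫_ℝ) (Ici t) :=
  ((integrable_inner_of_memLp_two h.memLp_fst (h.memLp_backward hS hc)).add
    (integrable_inner_of_memLp_two (h.memLp_forward hS hc) h.memLp_snd)).neg.congr <|
      .of_forall fun s ↦ neg_inner_add_inner_eq (A s) (G s) (Q s) (x s) (y s)

theorem mul_integral_norm_sq_fst_le (h : IsHamiltonianPair t A G Q x y)
    (hS : IsDissipativeHamiltonian t L κ c A G Q) (hκ : 0 < κ) (hc : 0 ≤ c) :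
    κ * ∫ s in Ici t, ‖x s‖ ^ 2 ≤ ‖x t‖ ^ 2 + c / κ * ⟪x t, y t⟫_ℝ := by
  have hf := h.memLp_forward hS hc
  have hfx := (integrable_inner_of_memLp_two hf h.memLp_fst).const_mul (-2)
  have hQG := (h.integrable_inner hS hc).const_mul (c / κ)
  calc κ * ∫ s in Ici t, ‖x s‖ ^ 2 = ∫ s in Ici t, κ * ‖x s‖ ^ 2 := (integral_const_mul _ _).symm
    _ ≤ _ := integral_mono_ae ((integrable_sq_norm_of_memLp_two h.memLp_fst).const_mul κ)
      (hfx.add hQG) ?_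
    _ = ‖x t‖ ^ 2 + c / κ * ⟪x t, y t⟫_ℝ := by
      rw [← h.integral_inner_eq hS hc, integral_add' hfx hQG, integral_const_mul,
        integral_const_mul]
      linear_combination -h.forward.two_mul_integral_inner h.memLp_fst hf
  filter_upwards [hS.inner_le, hS.isCocoercive_left, hS.isCocoercive_right] with s hA hG hQ
  have hdiss := mul_norm_sq_le_of_inner_le hκ (G s (y s)) (hA (x s))
  have hle : κ⁻¹ * ‖G s (y s)‖ ^ 2 ≤ κ⁻¹ * (c * (⟪Q s (x s), x s⟫_ℝ + ⟪G s (y s), y s⟫_ℝ)) := by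
    gcongr
    exact (hG _).trans (by gcongr; exact le_add_of_nonneg_left (hQ.inner_nonneg hc _))
  simp only [Pi.add_apply]
  linear_combination hdiss + hle

theorem mul_integral_norm_sq_snd_le (h : IsHamiltonianPair t A G Q x y)
    (hS : IsDissipativeHamiltonian t L κ c A G Q) (hκ : 0 < κ) (hc : 0 ≤ c) :
    κ * ∫ s in Ici t, ‖y s‖ ^ 2 ≤ -‖y t‖ ^ 2 + c / κ * ⟪x t, y t⟫_ℝ := by
  have hg := h.memLp_backward hS hc
  have hgy := (integrable_inner_of_memLp_two hg h.memLp_snd).const_mul 2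
  have hQG := (h.integrable_inner hS hc).const_mul (c / κ)
  calc κ * ∫ s in Ici t, ‖y s‖ ^ 2 = ∫ s in Ici t, κ * ‖y s‖ ^ 2 := (integral_const_mul _ _).symm
    _ ≤ _ := integral_mono_ae ((integrable_sq_norm_of_memLp_two h.memLp_snd).const_mul κ)
      (hgy.add hQG) ?_
    _ = -‖y t‖ ^ 2 + c / κ * ⟪x t, y t⟫_ℝ := by
      rw [← h.integral_inner_eq hS hc, integral_add' hgy hQG, integral_const_mul,
        integral_const_mul]
      linear_combination h.backward.two_mul_integral_inner h.memLp_snd hg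
  filter_upwards [hS.inner_le, hS.isCocoercive_left, hS.isCocoercive_right] with s hA hG hQ
  have hA' : ⟪((A s)†) (y s), y s⟫_ℝ ≤ -κ * ‖y s‖ ^ 2 := by
    rw [ContinuousLinearMap.adjoint_inner_left, real_inner_comm]
    exact hA _
  have hdiss := mul_norm_sq_le_of_inner_le hκ (-Q s (x s)) hA'
  have hle : κ⁻¹ * ‖Q s (x s)‖ ^ 2 ≤ κ⁻¹ * (c * (⟪Q s (x s), x s⟫_ℝ + ⟪G s (y s), y s⟫_ℝ)) := by
    gcongr
    exact (hQ _).trans (by gcongr; exact le_add_of_nonneg_right (hG.inner_nonneg hc _))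
  rw [norm_neg, sub_neg_eq_add, add_comm _ (Q s (x s))] at hdiss
  simp only [Pi.add_apply, inner_neg_left]
  linear_combination hdiss + hle

theorem norm_sq_add_integral_le (h : IsHamiltonianPair t A G Q x y)
    (hS : IsDissipativeHamiltonian t L κ c A G Q) (hκ : 0 < κ) (hc : 0 ≤ c) :
    ‖y t‖ ^ 2 + ∫ s in Ici t, (‖x s‖ ^ 2 + ‖y s‖ ^ 2) ≤
      ((c / κ) ^ 2 + (1 + 2 * (c / κ) ^ 2) / κ) * ‖x t‖ ^ 2 := by
  have hx := h.mul_integral_norm_sq_fst_le hS hκ hc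
  have hy := h.mul_integral_norm_sq_snd_le hS hκ hc
  rw [integral_add (integrable_sq_norm_of_memLp_two h.memLp_fst)
    (integrable_sq_norm_of_memLp_two h.memLp_snd)]
  set a := c / κ
  set X := ∫ s in Ici t, ‖x s‖ ^ 2
  set Y := ∫ s in Ici t, ‖y s‖ ^ 2
  have hY : 0 ≤ κ * Y := mul_nonneg hκ.le (integral_nonneg fun s ↦ by positivity)
  have hyoung : 2 * (a * ⟪x t, y t⟫_ℝ) ≤ a ^ 2 * ‖x t‖ ^ 2 + ‖y t‖ ^ 2 := by
    have hsq := norm_sub_sq_real (a • x t) (y t)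
    rw [real_inner_smul_left, norm_smul, mul_pow, Real.norm_eq_abs, sq_abs] at hsq
    linarith [sq_nonneg ‖a • x t - y t‖]
  have hyt : ‖y t‖ ^ 2 ≤ a ^ 2 * ‖x t‖ ^ 2 := by linarith
  have hXY : X + Y ≤ κ⁻¹ * ((1 + 2 * a ^ 2) * ‖x t‖ ^ 2) := by
    rw [le_inv_mul_iff₀ hκ]
    linarith [sq_nonneg ‖y t‖]
  calc ‖y t‖ ^ 2 + (X + Y) ≤ a ^ 2 * ‖x t‖ ^ 2 + κ⁻¹ * ((1 + 2 * a ^ 2) * ‖x t‖ ^ 2) :=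
        add_le_add hyt hXY
    _ = _ := by ring

theorem eq_zero (h : IsHamiltonianPair t A G Q x y)
    (hS : IsDissipativeHamiltonian t L κ c A G Q) (hκ : 0 < κ) (hc : 0 ≤ c) (hxt : x t = 0) {s : ℝ}
    (hs : t ≤ s) : x s = 0 ∧ y s = 0 := by
  have hest := h.norm_sq_add_integral_le hS hκ hc
  have hint : IntegrableOn (fun s ↦ ‖x s‖ ^ 2 + ‖y s‖ ^ 2) (Ici t) :=
    (integrable_sq_norm_of_memLp_two h.memLp_fst).add (integrable_sq_norm_of_memLp_two h.memLp_snd)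
  have hnonneg : 0 ≤ fun s ↦ ‖x s‖ ^ 2 + ‖y s‖ ^ 2 := fun s ↦ by positivity
  have hint0 : 0 ≤ ∫ s in Ici t, (‖x s‖ ^ 2 + ‖y s‖ ^ 2) := integral_nonneg hnonneg
  rw [hxt, norm_zero, zero_pow two_ne_zero, mul_zero] at hest
  have hyt : y t = 0 := norm_eq_zero.1 (pow_eq_zero_iff two_ne_zero |>.1
    (le_antisymm (by linarith) (sq_nonneg _)))
  have hae : ∀ᵐ s ∂volume.restrict (Ici t), x s = 0 ∧ y s = 0 := by
    filter_upwards [(integral_eq_zero_iff_of_nonneg hnonneg hint).1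
      (le_antisymm (by linarith [sq_nonneg ‖y t‖]) hint0)] with s hs
    have := (add_eq_zero_iff_of_nonneg (sq_nonneg ‖x s‖) (sq_nonneg ‖y s‖)).1 hs
    simpa using this
  have hzero {f z : ℝ → H} (hz : IsPrimitiveFrom t f z) (hzt : z t = 0)
      (hf : f =ᵐ[volume.restrict (Ici t)] 0) : z s = 0 := by
    simpa [hzt] using (hz.congr_deriv hf).eq_integral s hs
  refine ⟨hzero h.forward hxt ?_, hzero h.backward hyt ?_⟩ <;>
    filter_upwards [hae] with r hr <;> simp [hr]

theorem unique (h₁ : IsHamiltonianPair t A G Q x₁ y₁) (h₂ : IsHamiltonianPair t A G Q x₂ y₂)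
    (hS : IsDissipativeHamiltonian t L κ c A G Q) (hκ : 0 < κ) (hc : 0 ≤ c) (hxt : x₁ t = x₂ t)
    {s : ℝ} (hs : t ≤ s) : x₁ s = x₂ s ∧ y₁ s = y₂ s :=
  ((h₁.sub h₂).eq_zero hS hκ hc (sub_eq_zero.2 hxt) hs).imp sub_eq_zero.1 sub_eq_zero.1

end IsHamiltonianPair

end Hamiltonian

section LinearQuadratic

open Set
open scoped InnerProductSpace InnerProduct ENNReal

variable {H U : Type*} [NormedAddCommGroup H] [InnerProductSpace ℝ H]
  [NormedAddCommGroup U] [InnerProductSpace ℝ U] {t L κ δ ω : ℝ}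
  {A Q : ℝ → H →L[ℝ] H} {B : ℝ → U →L[ℝ] H} {R : ℝ → U →L[ℝ] U}

/-- The coefficients on `[t, ∞)` of a linear-quadratic control problem with state equation
`x' = A x + B u` and running cost `⟪Q x, x⟫ + ⟪R u, u⟫`: they are measurable and bounded by `L`,
`A + A† ≤ -2κ`, `Q` is positive and `δ ≤ R`. -/
structure IsDissipativeLQ (t L κ δ : ℝ) (A : ℝ → H →L[ℝ] H) (B : ℝ → U →L[ℝ] H)
    (Q : ℝ → H →L[ℝ] H) (R : ℝ → U →L[ℝ] U) : Prop where
  aestronglyMeasurable_drift : AEStronglyMeasurable A (volume.restrict (Ici t))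
  memLp_control : MemLp B ∞ (volume.restrict (Ici t))
  memLp_stateCost : MemLp Q ∞ (volume.restrict (Ici t))
  memLp_controlCost : MemLp R ∞ (volume.restrict (Ici t))
  norm_drift_le : ∀ᵐ s ∂volume.restrict (Ici t), ‖A s‖ ≤ L
  norm_control_le : ∀ᵐ s ∂volume.restrict (Ici t), ‖B s‖ ≤ L
  norm_stateCost_le : ∀ᵐ s ∂volume.restrict (Ici t), ‖Q s‖ ≤ L
  inner_drift_le : ∀ᵐ s ∂volume.restrict (Ici t), ∀ v, ⟪A s v, v⟫_ℝ ≤ -κ * ‖v‖ ^ 2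
  isPositive_stateCost : ∀ᵐ s ∂volume.restrict (Ici t), (Q s).IsPositive
  le_inner_controlCost : ∀ᵐ s ∂volume.restrict (Ici t), ∀ v, δ * ‖v‖ ^ 2 ≤ ⟪R s v, v⟫_ℝ

namespace IsDissipativeLQ

theorem norm_drift_add_le (h : IsDissipativeLQ t L κ δ A B Q R) (hω : 0 ≤ ω) :
    ∀ᵐ s ∂volume.restrict (Ici t),
      ‖A s + ω • ContinuousLinearMap.id ℝ H‖ ≤ √(L ^ 2 - 2 * ω * κ + ω ^ 2) := by
  filter_upwards [h.norm_drift_le, h.inner_drift_le] with s hAL hA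
  exact opNorm_add_smul_id_le hAL hω hA

theorem memLp_drift_add (h : IsDissipativeLQ t L κ δ A B Q R) (hω : 0 ≤ ω) :
    MemLp (fun s ↦ A s + ω • ContinuousLinearMap.id ℝ H) ∞ (volume.restrict (Ici t)) :=
  memLp_top_of_bound (h.aestronglyMeasurable_drift.add_const _) _ (h.norm_drift_add_le hω)

variable [CompleteSpace H]

theorem norm_forwardResolvent_mul_lt_one (h : IsDissipativeLQ t L κ δ A B Q R) (hω : 0 < ω)
    (hL : L ^ 2 < 2 * ω * κ) :
    ‖forwardResolvent t hω * lpMul (h.memLp_drift_add hω.le)‖ < 1 := by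
  have hsqrt : √(L ^ 2 - 2 * ω * κ + ω ^ 2) < ω := by
    rw [Real.sqrt_lt' hω]
    linarith
  calc ‖forwardResolvent t hω * lpMul (h.memLp_drift_add hω.le)‖
      ≤ ω⁻¹ * √(L ^ 2 - 2 * ω * κ + ω ^ 2) :=
        (norm_mul_le _ _).trans <| by
          gcongr
          · exact norm_forwardResolvent_le hω
          · exact norm_lpMul_le _ (Real.sqrt_nonneg _) (h.norm_drift_add_le hω.le)
    _ < ω⁻¹ * ω := by gcongr
    _ = 1 := inv_mul_cancel₀ hω.ne'

variable [CompleteSpace U]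

theorem isDissipativeHamiltonian (h : IsDissipativeLQ t L κ δ A B Q R) (hL : 0 ≤ L) (hδ : 0 < δ) :
    IsDissipativeHamiltonian t L κ (max L (L ^ 2 / δ)) A (fun s ↦ controlGramian (B s) (R s))
      Q where
  norm_le := h.norm_drift_le
  inner_le := h.inner_drift_le
  isCocoercive_left := by
    filter_upwards [h.norm_control_le, h.le_inner_controlCost] with s hB hR
    exact (isCocoercive_controlGramian hδ hB hR).mono (by positivity) (le_max_right _ _)
  isCocoercive_right := by
    filter_upwards [h.norm_stateCost_le, h.isPositive_stateCost] with s hQL hQ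
    exact (isCocoercive_of_isPositive hQ hQL).mono hL (le_max_left _ _)

theorem lpMul_control_eq (h : IsDissipativeLQ t L κ δ A B Q R) (hδ : 0 < δ) {y : HalfLineL2 t H}
    {u : HalfLineL2 t U}
    (hu : lpMul h.memLp_controlCost u = -((lpMul h.memLp_control)†) y) :
    lpMul h.memLp_control u =ᵐ[volume.restrict (Ici t)]
      fun s ↦ -controlGramian (B s) (R s) (y s) := by
  rw [adjoint_lpMul] at hu
  filter_upwards [coeFn_lpMul h.memLp_control u, coeFn_lpMul h.memLp_controlCost u,
    coeFn_lpMul (memLp_adjoint h.memLp_control) y, h.le_inner_controlCost,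
    Lp.coeFn_neg (lpMul (memLp_adjoint h.memLp_control) y)] with s hB hR hB' hδR hneg
  have hRu : R s (u s) = -((B s)†) (y s) := by rw [← hR, hu, hneg, Pi.neg_apply, hB']
  have hinv : Ring.inverse (R s) (R s (u s)) = u s :=
    congr($(Ring.inverse_mul_cancel _ (isUnit_of_mul_norm_sq_le_inner hδ hδR)) (u s))
  rw [hB, ← hinv, hRu, map_neg, map_neg]
  rfl

theorem exists_isHamiltonianPair (h : IsDissipativeLQ t L κ δ A B Q R) (hκ : 0 < κ) (hδ : 0 < δ)
    (x₀ : H) :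
    ∃ x y, x t = x₀ ∧
      IsHamiltonianPair t A (fun s ↦ controlGramian (B s) (R s)) Q x y := by
  obtain ⟨ω, hω, hωL⟩ : ∃ ω > 0, L ^ 2 < 2 * ω * κ :=
    ⟨L ^ 2 / κ + 1, by positivity, by field_simp; linarith [sq_nonneg L]⟩
  set M := lpMul (h.memLp_drift_add hω.le)
  have hQ_nonneg : ∀ v, 0 ≤ ⟪lpMul h.memLp_stateCost v, v⟫_ℝ := fun v ↦ by
    simpa only [zero_mul] using mul_norm_sq_le_inner_lpMul h.memLp_stateCost (c := 0)
      (h.isPositive_stateCost.mono fun s hs v ↦ by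
        simpa only [zero_mul] using hs.inner_nonneg_left v) v
  obtain ⟨X, Y, u, hX, hY, hu⟩ := exists_optimality_system (lpMul h.memLp_control)
    (h.norm_forwardResolvent_mul_lt_one hω hωL) hδ hQ_nonneg
    (mul_norm_sq_le_inner_lpMul h.memLp_controlCost h.le_inner_controlCost) (freeMotion t hω x₀)
  obtain ⟨x, hxt, hxX, hx⟩ :=
    exists_isPrimitiveFrom_forwardResolvent hω (M X + lpMul h.memLp_control u) x₀
  obtain ⟨y, hyY, hy⟩ :=
    exists_isPrimitiveFrom_adjoint_forwardResolvent hω ((M†) Y + lpMul h.memLp_stateCost X)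
  rw [← hX] at hxX
  rw [← hY] at hyY
  refine ⟨x, y, hxt, hx.congr_deriv ?_, hy.congr_deriv ?_, (memLp_congr_ae hxX).2 (Lp.memLp X),
    (memLp_congr_ae hyY).2 (Lp.memLp Y)⟩
  · filter_upwards [Lp.coeFn_add (M X) (lpMul h.memLp_control u),
      coeFn_lpMul (h.memLp_drift_add hω.le) X, h.lpMul_control_eq hδ hu, hxX, hyY]
      with s hadd hM hB hxs hys
    rw [hadd, Pi.add_apply, hM, hB, ← hxs, ← hys, _root_.add_apply, _root_.smul_apply,
      ContinuousLinearMap.id_apply]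
    abel
  · rw [adjoint_lpMul]
    filter_upwards [Lp.coeFn_add (lpMul (memLp_adjoint (h.memLp_drift_add hω.le)) Y)
      (lpMul h.memLp_stateCost X), coeFn_lpMul (memLp_adjoint (h.memLp_drift_add hω.le)) Y,
      coeFn_lpMul h.memLp_stateCost X, hxX, hyY] with s hadd hM hQ hxs hys
    rw [hadd, Pi.add_apply, hM, hQ, ← hxs, ← hys, map_add, map_smulₛₗ,
      ContinuousLinearMap.adjoint_id, conj_trivial, _root_.add_apply, _root_.smul_apply,
      ContinuousLinearMap.id_apply]
    abel

end IsDissipativeLQ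

end LinearQuadratic

section EuclideanCLM

open scoped InnerProductSpace InnerProduct ENNReal

variable {m n : Type*} [Fintype m] [Fintype n]

theorem inner_toLp_eq_dotProduct (v w : n → ℝ) :
    ⟪WithLp.toLp 2 v, WithLp.toLp 2 w⟫_ℝ = v ⬝ᵥ w := by
  rw [EuclideanSpace.inner_toLp_toLp, star_trivial, dotProduct_comm]

theorem norm_toLp_sq_eq_dotProduct (v : n → ℝ) : ‖WithLp.toLp 2 v‖ ^ 2 = v ⬝ᵥ v := by
  rw [← real_inner_self_eq_norm_sq, inner_toLp_eq_dotProduct]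

variable [DecidableEq n] {M : Matrix m n ℝ} {N : Matrix n n ℝ} {L : ℝ}

/-- The continuous linear map between Euclidean spaces given by a matrix; it extends
`Matrix.toEuclideanCLM` to rectangular matrices. -/
noncomputable def euclideanCLM : Matrix m n ℝ →ₗ[ℝ] EuclideanSpace ℝ n →L[ℝ] EuclideanSpace ℝ m :=
  LinearMap.toContinuousLinearMap.toLinearMap ∘ₗ toEuclideanLin.toLinearMap

theorem euclideanCLM_toLp (M : Matrix m n ℝ) (v : n → ℝ) :
    euclideanCLM M (WithLp.toLp 2 v) = WithLp.toLp 2 (M *ᵥ v) :=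
  rfl

theorem euclideanCLM_eq_toEuclideanCLM (N : Matrix n n ℝ) :
    euclideanCLM N = toEuclideanCLM (𝕜 := ℝ) N :=
  rfl

theorem adjoint_euclideanCLM [DecidableEq m] (M : Matrix m n ℝ) :
    (euclideanCLM M)† = euclideanCLM Mᵀ := by
  rw [← conjTranspose_eq_transpose_of_trivial]
  exact (ContinuousLinearMap.coe_injective <| toEuclideanLin_conjTranspose_eq_adjoint M).symm

theorem inverse_euclideanCLM (N : Matrix n n ℝ) :
    Ring.inverse (euclideanCLM N) = euclideanCLM N⁻¹ := by
  rw [nonsing_inv_eq_ringInverse, euclideanCLM_eq_toEuclideanCLM, euclideanCLM_eq_toEuclideanCLM]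
  by_cases hN : IsUnit N
  · lift N to (Matrix n n ℝ)ˣ using hN
    rw [Ring.inverse_unit]
    exact Ring.inverse_unit (Units.map (MonoidHomClass.toMonoidHom (toEuclideanCLM (𝕜 := ℝ))) N)
  · rw [Ring.inverse_non_unit _ hN, map_zero,
      Ring.inverse_non_unit _ ((MulEquiv.isUnit_map _).not.2 hN)]

theorem norm_euclideanCLM_le (hM : ∀ v : n → ℝ, (M *ᵥ v) ⬝ᵥ (M *ᵥ v) ≤ L ^ 2 * (v ⬝ᵥ v)) :
    ‖euclideanCLM M‖ ≤ |L| := by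
  refine ContinuousLinearMap.opNorm_le_bound _ (abs_nonneg L) fun v ↦ ?_
  refine le_of_sq_le_sq ?_ (by positivity)
  rw [← WithLp.toLp_ofLp 2 v, euclideanCLM_toLp, mul_pow, sq_abs, norm_toLp_sq_eq_dotProduct,
    norm_toLp_sq_eq_dotProduct]
  exact hM _

theorem stronglyMeasurable_euclideanCLM {α : Type*} [MeasurableSpace α] {M : α → Matrix m n ℝ}
    (hM : ∀ i j, Measurable fun s ↦ M s i j) : StronglyMeasurable fun s ↦ euclideanCLM (M s) := by
  have hcont : Continuous (euclideanCLM : Matrix m n ℝ →ₗ[ℝ] _) :=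
    LinearMap.continuous_of_finiteDimensional _
  exact hcont.comp_stronglyMeasurable
    (measurable_pi_lambda _ fun i ↦ measurable_pi_lambda _ (hM i)).stronglyMeasurable

theorem memLp_top_euclideanCLM {α : Type*} {_ : MeasurableSpace α} {μ : Measure α}
    {M : α → Matrix m n ℝ} (hM : ∀ i j, Measurable fun s ↦ M s i j)
    (hL : ∀ᵐ s ∂μ, ∀ v, (M s *ᵥ v) ⬝ᵥ (M s *ᵥ v) ≤ L ^ 2 * (v ⬝ᵥ v)) :
    MemLp (fun s ↦ euclideanCLM (M s)) ∞ μ :=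
  memLp_top_of_bound (stronglyMeasurable_euclideanCLM hM).aestronglyMeasurable |L| <|
    hL.mono fun _ hs ↦ norm_euclideanCLM_le hs

theorem isPositive_euclideanCLM (hsymm : Nᵀ = N) (hN : ∀ v, 0 ≤ (N *ᵥ v) ⬝ᵥ v) :
    (euclideanCLM N).IsPositive := by
  refine (ContinuousLinearMap.isPositive_toLinearMap_iff _).1 <|
    isPositive_toEuclideanLin_iff.2 <| .of_dotProduct_mulVec_nonneg ?_ fun v ↦ ?_
  · rw [IsHermitian, conjTranspose_eq_transpose_of_trivial, hsymm]
  · rw [star_trivial, dotProduct_comm]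
    exact hN v

end EuclideanCLM

section WeightedLift

open Set
open scoped InnerProductSpace InnerProduct ENNReal

/-- The curve `s ↦ e^{Ks} x s` in Euclidean space; `x` belongs to the weighted space
`L^{2,K}(t, ∞)` when `weightedLift K x` belongs to `L²(t, ∞)`. -/
noncomputable def weightedLift {ι : Type*} (K : ℝ) (x : ℝ → ι → ℝ) (s : ℝ) : EuclideanSpace ℝ ι :=
  Real.exp (K * s) • WithLp.toLp 2 (x s)

theorem weightedLift_injective_at {ι : Type*} {K s : ℝ} {x y : ℝ → ι → ℝ}
    (h : weightedLift K x s = weightedLift K y s) : x s = y s :=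
  WithLp.toLp_injective 2 (smul_right_injective _ (Real.exp_ne_zero _) h)

theorem weightedLift_surjective {ι : Type*} (K : ℝ) :
    Function.Surjective (weightedLift (ι := ι) K) := fun z ↦
  ⟨fun s ↦ WithLp.ofLp (Real.exp (-(K * s)) • z s), funext fun s ↦ by
    rw [weightedLift, WithLp.toLp_ofLp, smul_smul, ← Real.exp_add, add_neg_cancel, Real.exp_zero,
      one_smul]⟩

variable {m n : Type*} [Fintype m] [Fintype n] {t K : ℝ} {f x y : ℝ → n → ℝ}

theorem norm_sq_weightedLift (K : ℝ) (x : ℝ → n → ℝ) (s : ℝ) :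
    ‖weightedLift K x s‖ ^ 2 = Real.exp (2 * K * s) * (x s ⬝ᵥ x s) := by
  rw [weightedLift, norm_smul, mul_pow, norm_toLp_sq_eq_dotProduct, Real.norm_eq_abs, sq_abs,
    ← Real.exp_nat_mul]
  congr 2
  push_cast
  ring

theorem euclideanCLM_weightedLift [DecidableEq n] (M : ℝ → Matrix m n ℝ) (x : ℝ → n → ℝ) (s : ℝ) :
    euclideanCLM (M s) (weightedLift K x s) = weightedLift K (fun r ↦ M r *ᵥ x r) s := by
  rw [weightedLift, map_smul, euclideanCLM_toLp, weightedLift]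

theorem memLp_weightedLift_iff
    (hx : AEStronglyMeasurable (weightedLift K x) (volume.restrict (Ici t))) :
    MemLp (weightedLift K x) 2 (volume.restrict (Ici t)) ↔
      IntegrableOn (fun s ↦ Real.exp (2 * K * s) * (x s ⬝ᵥ x s)) (Ici t) := by
  rw [memLp_two_iff_integrable_sq_norm hx]
  simp only [norm_sq_weightedLift, IntegrableOn]

theorem isPrimitiveFrom_weightedLift_iff :
    IsPrimitiveFrom t (weightedLift K fun s ↦ f s + K • x s) (weightedLift K x) ↔
      IsPrimitiveFrom t f x := by
  refine ⟨fun h ↦ ?_, fun h ↦ ?_⟩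
  · have hexp (s : ℝ) (v : EuclideanSpace ℝ n) :
        Real.exp (-K * s) • Real.exp (K * s) • v = v := by
      rw [smul_smul, ← Real.exp_add, neg_mul, neg_add_cancel, Real.exp_zero, one_smul]
    have hderiv (s : ℝ) : Real.exp (-K * s) •
        (weightedLift K (fun s ↦ f s + K • x s) s + -K • weightedLift K x s) =
          WithLp.toLp 2 (f s) := by
      rw [weightedLift, weightedLift, smul_comm (-K), ← smul_add, hexp, WithLp.toLp_add,
        WithLp.toLp_smul, neg_smul, add_neg_cancel_right]
    exact (((h.exp_smul (-K)).clm_comp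
      (EuclideanSpace.equiv n ℝ).toContinuousLinearMap).congr_deriv
        (.of_forall fun s ↦ congrArg WithLp.ofLp (hderiv s))).congr
      fun s _ ↦ congrArg WithLp.ofLp (hexp s _)
  · exact (h.clm_comp (EuclideanSpace.equiv n ℝ).symm.toContinuousLinearMap).exp_smul K

end WeightedLift

section HamSol

open Set
open scoped InnerProductSpace InnerProduct ENNReal

variable {n m : ℕ} {t K δ κ L : ℝ} {A Q : ℝ → Matrix (Fin n) (Fin n) ℝ}
  {B : ℝ → Matrix (Fin n) (Fin m) ℝ} {R : ℝ → Matrix (Fin m) (Fin m) ℝ}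
  {xt : Fin n → ℝ} {x y : ℝ → Fin n → ℝ}

theorem isHamSol_iff_isPrimitiveFrom : IsHamSol t K A B Q R xt x y ↔ x t = xt ∧
    IsPrimitiveFrom t (fun s ↦ A s *ᵥ x s - B s *ᵥ ((R s)⁻¹ *ᵥ ((B s)ᵀ *ᵥ y s))) x ∧
    IsPrimitiveFrom t (fun s ↦
      -(Q s *ᵥ x s + ((2 * K) • (1 : Matrix (Fin n) (Fin n) ℝ) + A s)ᵀ *ᵥ y s)) y ∧
    IntegrableOn (fun s ↦ Real.exp (2 * K * s) * (x s ⬝ᵥ x s)) (Ici t) ∧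
    IntegrableOn (fun s ↦ Real.exp (2 * K * s) * (y s ⬝ᵥ y s)) (Ici t) := by
  refine ⟨?_, ?_⟩
  · rintro ⟨rfl, hxi, hx, hyi, hy, hx2, hy2⟩
    exact ⟨rfl, ⟨hxi, hx⟩, ⟨hyi, hy⟩, hx2, hy2⟩
  · rintro ⟨rfl, hx, hy, hx2, hy2⟩
    exact ⟨rfl, hx.integrableOn, hx.eq_integral, hy.integrableOn, hy.eq_integral, hx2, hy2⟩

theorem controlGramian_euclideanCLM_weightedLift (s : ℝ) :
    controlGramian (euclideanCLM (B s)) (euclideanCLM (R s)) (weightedLift K y s) =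
      weightedLift K (fun r ↦ B r *ᵥ ((R r)⁻¹ *ᵥ ((B r)ᵀ *ᵥ y r))) s := by
  rw [controlGramian, adjoint_euclideanCLM, inverse_euclideanCLM, ContinuousLinearMap.comp_apply,
    ContinuousLinearMap.comp_apply, euclideanCLM_weightedLift fun r ↦ (B r)ᵀ,
    euclideanCLM_weightedLift fun r ↦ (R r)⁻¹, euclideanCLM_weightedLift]

theorem forward_weightedLift_eq :
    (fun s ↦ euclideanCLM (A s + K • 1) (weightedLift K x s) -
      controlGramian (euclideanCLM (B s)) (euclideanCLM (R s)) (weightedLift K y s)) =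
    weightedLift K fun s ↦
      A s *ᵥ x s - B s *ᵥ ((R s)⁻¹ *ᵥ ((B s)ᵀ *ᵥ y s)) + K • x s := by
  ext1 s
  rw [euclideanCLM_weightedLift fun r ↦ A r + K • 1, controlGramian_euclideanCLM_weightedLift,
    weightedLift, weightedLift, weightedLift, ← smul_sub, ← WithLp.toLp_sub, add_mulVec,
    smul_mulVec, one_mulVec, sub_add_eq_add_sub]

theorem backward_weightedLift_eq :
    (fun s ↦ -(euclideanCLM (Q s) (weightedLift K x s) +
      ((euclideanCLM (A s + K • 1))†) (weightedLift K y s))) =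
    weightedLift K fun s ↦
      -(Q s *ᵥ x s + ((2 * K) • (1 : Matrix (Fin n) (Fin n) ℝ) + A s)ᵀ *ᵥ y s) + K • y s := by
  ext1 s
  rw [adjoint_euclideanCLM, euclideanCLM_weightedLift,
    euclideanCLM_weightedLift fun r ↦ (A r + K • 1)ᵀ, weightedLift, weightedLift, weightedLift,
    ← smul_add, ← smul_neg, ← WithLp.toLp_add, ← WithLp.toLp_neg]
  simp only [transpose_add, transpose_smul, transpose_one, add_mulVec, smul_mulVec, one_mulVec]
  congr 2
  module

theorem isHamSol_iff : IsHamSol t K A B Q R xt x y ↔ x t = xt ∧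
    IsHamiltonianPair t (fun s ↦ euclideanCLM (A s + K • 1))
      (fun s ↦ controlGramian (euclideanCLM (B s)) (euclideanCLM (R s)))
      (fun s ↦ euclideanCLM (Q s)) (weightedLift K x) (weightedLift K y) := by
  rw [isHamSol_iff_isPrimitiveFrom, isHamiltonianPair_iff, forward_weightedLift_eq,
    backward_weightedLift_eq, isPrimitiveFrom_weightedLift_iff, isPrimitiveFrom_weightedLift_iff]
  refine and_congr_right fun _ ↦ and_congr_right fun hx ↦ and_congr_right fun hy ↦ ?_
  rw [memLp_weightedLift_iff (isPrimitiveFrom_weightedLift_iff.2 hx).aestronglyMeasurable,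
    memLp_weightedLift_iff (isPrimitiveFrom_weightedLift_iff.2 hy).aestronglyMeasurable]

theorem inner_euclideanCLM_add_smul_one_le {A : Matrix (Fin n) (Fin n) ℝ}
    (hA : ∀ v, ((A + Aᵀ) *ᵥ v) ⬝ᵥ v ≤ -2 * κ * (v ⬝ᵥ v)) (K : ℝ) (v : EuclideanSpace ℝ (Fin n)) :
    ⟪euclideanCLM (A + K • 1) v, v⟫_ℝ ≤ -(κ - K) * ‖v‖ ^ 2 := by
  obtain ⟨v, rfl⟩ := WithLp.toLp_surjective 2 v
  have hsymm : (Aᵀ *ᵥ v) ⬝ᵥ v = (A *ᵥ v) ⬝ᵥ v := by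
    rw [mulVec_transpose, ← dotProduct_mulVec, dotProduct_comm]
  have hv := hA v
  rw [add_mulVec, add_dotProduct, hsymm] at hv
  rw [euclideanCLM_toLp, inner_toLp_eq_dotProduct, norm_toLp_sq_eq_dotProduct, add_mulVec,
    smul_mulVec, one_mulVec, add_dotProduct, smul_dotProduct, smul_eq_mul]
  linarith

theorem norm_euclideanCLM_add_smul_one_le {A : Matrix (Fin n) (Fin n) ℝ}
    (hA : ∀ v, (A *ᵥ v) ⬝ᵥ (A *ᵥ v) ≤ L ^ 2 * (v ⬝ᵥ v)) (K : ℝ) :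
    ‖euclideanCLM (A + K • 1)‖ ≤ |L| + |K| := by
  have hK : ‖euclideanCLM (K • (1 : Matrix (Fin n) (Fin n) ℝ))‖ ≤ |K| :=
    norm_euclideanCLM_le fun v ↦ by
      rw [smul_mulVec, one_mulVec, smul_dotProduct, dotProduct_smul, smul_smul, smul_eq_mul, sq]
  rw [map_add]
  exact norm_add_le_of_le (norm_euclideanCLM_le hA) hK

theorem isDissipativeLQ_euclideanCLM
    (hA : ∀ i j, Measurable fun s ↦ A s i j) (hB : ∀ i j, Measurable fun s ↦ B s i j)
    (hQ : ∀ i j, Measurable fun s ↦ Q s i j) (hR : ∀ i j, Measurable fun s ↦ R s i j)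
    (hQsym : ∀ᵐ s ∂volume.restrict (Ici t), (Q s)ᵀ = Q s)
    (hbd : ∀ᵐ s ∂volume.restrict (Ici t),
      (∀ v, (A s *ᵥ v) ⬝ᵥ (A s *ᵥ v) ≤ L ^ 2 * (v ⬝ᵥ v)) ∧
      (∀ v, (B s *ᵥ v) ⬝ᵥ (B s *ᵥ v) ≤ L ^ 2 * (v ⬝ᵥ v)) ∧
      (∀ v, (Q s *ᵥ v) ⬝ᵥ (Q s *ᵥ v) ≤ L ^ 2 * (v ⬝ᵥ v)) ∧
      (∀ v, (R s *ᵥ v) ⬝ᵥ (R s *ᵥ v) ≤ L ^ 2 * (v ⬝ᵥ v)))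
    (hQpsd : ∀ᵐ s ∂volume.restrict (Ici t), ∀ v, 0 ≤ (Q s *ᵥ v) ⬝ᵥ v)
    (hRpd : ∀ᵐ s ∂volume.restrict (Ici t), ∀ v, δ * (v ⬝ᵥ v) ≤ (R s *ᵥ v) ⬝ᵥ v)
    (hdiss : ∀ᵐ s ∂volume.restrict (Ici t),
      ∀ v, ((A s + (A s)ᵀ) *ᵥ v) ⬝ᵥ v ≤ -2 * κ * (v ⬝ᵥ v)) (K : ℝ) :
    IsDissipativeLQ t (|L| + |K|) (κ - K) δ (fun s ↦ euclideanCLM (A s + K • 1))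
      (fun s ↦ euclideanCLM (B s)) (fun s ↦ euclideanCLM (Q s)) (fun s ↦ euclideanCLM (R s)) where
  aestronglyMeasurable_drift :=
    (stronglyMeasurable_euclideanCLM fun i j ↦ (hA i j).add_const _).aestronglyMeasurable
  memLp_control := memLp_top_euclideanCLM hB (hbd.mono fun _ hs ↦ hs.2.1)
  memLp_stateCost := memLp_top_euclideanCLM hQ (hbd.mono fun _ hs ↦ hs.2.2.1)
  memLp_controlCost := memLp_top_euclideanCLM hR (hbd.mono fun _ hs ↦ hs.2.2.2)
  norm_drift_le := hbd.mono fun _ hs ↦ norm_euclideanCLM_add_smul_one_le hs.1 K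
  norm_control_le := hbd.mono fun _ hs ↦
    (norm_euclideanCLM_le hs.2.1).trans (le_add_of_nonneg_right (abs_nonneg K))
  norm_stateCost_le := hbd.mono fun _ hs ↦
    (norm_euclideanCLM_le hs.2.2.1).trans (le_add_of_nonneg_right (abs_nonneg K))
  inner_drift_le := hdiss.mono fun _ hs ↦ inner_euclideanCLM_add_smul_one_le hs K
  isPositive_stateCost := by
    filter_upwards [hQsym, hQpsd] with s hsymm hpsd using isPositive_euclideanCLM hsymm hpsd
  le_inner_controlCost := hRpd.mono fun _ hs v ↦ by
    rw [← WithLp.toLp_ofLp 2 v, euclideanCLM_toLp, inner_toLp_eq_dotProduct,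
      norm_toLp_sq_eq_dotProduct]
    exact hs _

end HamSol

theorem stmt_9_general (n m : ℕ) (t δ κ K : ℝ) (hδ : 0 < δ) (hK : K < κ)
    (A : ℝ → Matrix (Fin n) (Fin n) ℝ) (B : ℝ → Matrix (Fin n) (Fin m) ℝ)
    (Q : ℝ → Matrix (Fin n) (Fin n) ℝ) (R : ℝ → Matrix (Fin m) (Fin m) ℝ)
    (hA : ∀ i j, Measurable fun s ↦ A s i j)
    (hB : ∀ i j, Measurable fun s ↦ B s i j)
    (hQ : ∀ i j, Measurable fun s ↦ Q s i j)
    (hR : ∀ i j, Measurable fun s ↦ R s i j)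
    (hQsym : ∀ᵐ s ∂volume.restrict (Set.Ici t), (Q s)ᵀ = Q s)
    (hbd : ∃ L : ℝ, ∀ᵐ s ∂volume.restrict (Set.Ici t),
      (∀ v : Fin n → ℝ, (A s *ᵥ v) ⬝ᵥ (A s *ᵥ v) ≤ L ^ 2 * (v ⬝ᵥ v)) ∧
      (∀ v : Fin m → ℝ, (B s *ᵥ v) ⬝ᵥ (B s *ᵥ v) ≤ L ^ 2 * (v ⬝ᵥ v)) ∧
      (∀ v : Fin n → ℝ, (Q s *ᵥ v) ⬝ᵥ (Q s *ᵥ v) ≤ L ^ 2 * (v ⬝ᵥ v)) ∧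
      (∀ v : Fin m → ℝ, (R s *ᵥ v) ⬝ᵥ (R s *ᵥ v) ≤ L ^ 2 * (v ⬝ᵥ v)))
    (hQpsd : ∀ᵐ s ∂volume.restrict (Set.Ici t),
      ∀ v : Fin n → ℝ, 0 ≤ (Q s *ᵥ v) ⬝ᵥ v)
    (hRpd : ∀ᵐ s ∂volume.restrict (Set.Ici t),
      ∀ v : Fin m → ℝ, δ * (v ⬝ᵥ v) ≤ (R s *ᵥ v) ⬝ᵥ v)
    (hdiss : ∀ᵐ s ∂volume.restrict (Set.Ici t),
      ∀ v : Fin n → ℝ, ((A s + (A s)ᵀ) *ᵥ v) ⬝ᵥ v ≤ -2 * κ * (v ⬝ᵥ v)) :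
    ∃ C > (0 : ℝ), ∀ xt : Fin n → ℝ,
      (∃ x y : ℝ → (Fin n → ℝ), IsHamSol t K A B Q R xt x y) ∧
      (∀ x₁ y₁ x₂ y₂ : ℝ → (Fin n → ℝ),
        IsHamSol t K A B Q R xt x₁ y₁ → IsHamSol t K A B Q R xt x₂ y₂ →
        ∀ s, t ≤ s → x₁ s = x₂ s ∧ y₁ s = y₂ s) ∧
      (∀ x y : ℝ → (Fin n → ℝ), IsHamSol t K A B Q R xt x y →
        Real.exp (2 * K * t) * (y t ⬝ᵥ y t)
          + ∫ s in Set.Ici t, Real.exp (2 * K * s) * ((x s ⬝ᵥ x s) + (y s ⬝ᵥ y s))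
        ≤ C * (Real.exp (2 * K * t) * (xt ⬝ᵥ xt))) := by
  obtain ⟨L, hbd⟩ := hbd
  have hLQ := isDissipativeLQ_euclideanCLM hA hB hQ hR hQsym hbd hQpsd hRpd hdiss K
  have hS := hLQ.isDissipativeHamiltonian (by positivity) hδ
  have hκK : 0 < κ - K := sub_pos.2 hK
  set c := max (|L| + |K|) ((|L| + |K|) ^ 2 / δ)
  have hc : 0 ≤ c := by positivity
  refine ⟨(c / (κ - K)) ^ 2 + (1 + 2 * (c / (κ - K)) ^ 2) / (κ - K), by positivity,
    fun xt ↦ ⟨?_, fun x₁ y₁ x₂ y₂ h₁ h₂ s hs ↦ ?_, fun x y h ↦ ?_⟩⟩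
  · obtain ⟨x', y', hx, hxy⟩ :=
      hLQ.exists_isHamiltonianPair hκK hδ (weightedLift K (fun _ ↦ xt) t)
    obtain ⟨x, rfl⟩ := weightedLift_surjective K x'
    obtain ⟨y, rfl⟩ := weightedLift_surjective K y'
    exact ⟨x, y, isHamSol_iff.2 ⟨weightedLift_injective_at hx, hxy⟩⟩
  · obtain ⟨hxt₁, hxy₁⟩ := isHamSol_iff.1 h₁
    obtain ⟨hxt₂, hxy₂⟩ := isHamSol_iff.1 h₂
    have hxt : weightedLift K x₁ t = weightedLift K x₂ t := by
      rw [weightedLift, weightedLift, hxt₁, hxt₂]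
    exact (hxy₁.unique hxy₂ hS hκK hc hxt hs).imp weightedLift_injective_at
      weightedLift_injective_at
  · obtain ⟨rfl, hxy⟩ := isHamSol_iff.1 h
    simpa only [norm_sq_weightedLift, ← mul_add] using hxy.norm_sq_add_integral_le hS hκK hc

/-- Deterministic version of Proposition 3.8: unique solvability in the
weighted space of the infinite-horizon Hamiltonian forward–backward system
(with vanishing cross weight `S`), together with the stability estimate
(3.22), for all weights `K ∈ [0, min(k,κ))` for some `k > 0`. -/
theorem stmt_9 (n m : ℕ) (t δ κ : ℝ) (ht : 0 ≤ t) (hδ : 0 < δ) (hκ : 0 < κ)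
    (A : ℝ → Matrix (Fin n) (Fin n) ℝ) (B : ℝ → Matrix (Fin n) (Fin m) ℝ)
    (Q : ℝ → Matrix (Fin n) (Fin n) ℝ) (R : ℝ → Matrix (Fin m) (Fin m) ℝ)
    (hA : ∀ i j, Measurable fun s => A s i j)
    (hB : ∀ i j, Measurable fun s => B s i j)
    (hQ : ∀ i j, Measurable fun s => Q s i j)
    (hR : ∀ i j, Measurable fun s => R s i j)
    (hQsym : ∀ᵐ s ∂(volume.restrict (Set.Ici t)), (Q s)ᵀ = Q s)
    (hRsym : ∀ᵐ s ∂(volume.restrict (Set.Ici t)), (R s)ᵀ = R s)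
    (hbd : ∃ L : ℝ, ∀ᵐ s ∂(volume.restrict (Set.Ici t)),
      (∀ v : Fin n → ℝ, (A s *ᵥ v) ⬝ᵥ (A s *ᵥ v) ≤ L^2 * (v ⬝ᵥ v)) ∧
      (∀ v : Fin m → ℝ, (B s *ᵥ v) ⬝ᵥ (B s *ᵥ v) ≤ L^2 * (v ⬝ᵥ v)) ∧
      (∀ v : Fin n → ℝ, (Q s *ᵥ v) ⬝ᵥ (Q s *ᵥ v) ≤ L^2 * (v ⬝ᵥ v)) ∧
      (∀ v : Fin m → ℝ, (R s *ᵥ v) ⬝ᵥ (R s *ᵥ v) ≤ L^2 * (v ⬝ᵥ v)))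
    (hQpsd : ∀ᵐ s ∂(volume.restrict (Set.Ici t)),
      ∀ v : Fin n → ℝ, 0 ≤ (Q s *ᵥ v) ⬝ᵥ v)
    (hRpd : ∀ᵐ s ∂(volume.restrict (Set.Ici t)),
      ∀ v : Fin m → ℝ, δ * (v ⬝ᵥ v) ≤ (R s *ᵥ v) ⬝ᵥ v)
    (hdiss : ∀ᵐ s ∂(volume.restrict (Set.Ici t)),
      ∀ v : Fin n → ℝ, ((A s + (A s)ᵀ) *ᵥ v) ⬝ᵥ v ≤ -2 * κ * (v ⬝ᵥ v)) :
    ∃ k > (0:ℝ), ∀ K : ℝ, 0 ≤ K → K < min k κ →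
      ∃ C > (0:ℝ), ∀ xt : Fin n → ℝ,
        (∃ x y : ℝ → (Fin n → ℝ), IsHamSol t K A B Q R xt x y) ∧
        (∀ x₁ y₁ x₂ y₂ : ℝ → (Fin n → ℝ),
          IsHamSol t K A B Q R xt x₁ y₁ → IsHamSol t K A B Q R xt x₂ y₂ →
          ∀ s, t ≤ s → x₁ s = x₂ s ∧ y₁ s = y₂ s) ∧
        (∀ x y : ℝ → (Fin n → ℝ), IsHamSol t K A B Q R xt x y →
          Real.exp (2*K*t) * (y t ⬝ᵥ y t)
            + ∫ s in Set.Ici t, Real.exp (2*K*s) * ((x s ⬝ᵥ x s) + (y s ⬝ᵥ y s))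
          ≤ C * (Real.exp (2*K*t) * (xt ⬝ᵥ xt))) :=
  ⟨1, one_pos, fun K _ hK ↦ stmt_9_general n m t δ κ K hδ (hK.trans_le (min_le_right _ _)) A B Q R
    hA hB hQ hR hQsym hbd hQpsd hRpd hdiss⟩
end

section
/- Let n ∈ ℕ, t ≥ 0, κ₂ ∈ ℝ and K ∈ ℝ with K > −κ₂. Let φ : [t,∞) → ℝ^n be measurable with φ ∈ L^{2,K}(t,∞;ℝ^n). Then there exists a unique locally absolutely continuous y : [t,∞) → ℝ^n with y ∈ L^{2,K}(t,∞;ℝ^n) satisfying y'(s) = κ₂ y(s) − φ(s) for almost every s ≥ t, and it is given explicitly by y(s) = ∫_s^∞ e^{−κ₂(r−s)} φ(r) dr. -/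
open MeasureTheory Matrix

/-- `y` is a locally absolutely continuous solution, in the weighted space
`L^{2,K}(t,∞;ℝ^n)`, of the backward equation `y' = κ₂ y - φ` on `[t,∞)`. -/
def IsBwdSol (t K κ₂ : ℝ) {n : ℕ} (φ y : ℝ → (Fin n → ℝ)) : Prop :=
  (∀ T, t ≤ T →
    MeasureTheory.IntegrableOn (fun s => κ₂ • y s - φ s) (Set.Icc t T)) ∧
  (∀ s, t ≤ s → y s = y t + ∫ r in t..s, (κ₂ • y r - φ r)) ∧
  MeasureTheory.IntegrableOn (fun s => Real.exp (2*K*s) * (y s ⬝ᵥ y s)) (Set.Ici t)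

/-!
The equation `y' = κ y - φ` says that `e^{-κ s} y(s)` has derivative `-e^{-κ s} φ(s)`. Two solutions
thus differ by a multiple of `e^{κ s}`, whose weight `e^{(κ + K) s}` grows, so at most one lies in
the weighted space. Integrating from `s` to `∞` yields the tail integral
`y(s) = ∫_s^∞ e^{-κ(r-s)} φ(r) dr`. Since `e^{K s} y(s)` is the tail integral of `e^{K r} φ(r)` for
the rate `δ = κ + K > 0`, it suffices to bound the latter on `L^p`: up to the factor `δ⁻¹` it
averages its argument over translations by an exponentially distributed amount.
-/

open Set ProbabilityTheory
open scoped ENNReal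

section AbsolutelyContinuous

variable {E : Type*} [NormedAddCommGroup E] [NormedSpace ℝ E] {f f' : ℝ → E} {a b : ℝ}

lemma absolutelyContinuousOnInterval_of_dist_le {X Y : Type*} [PseudoMetricSpace X]
    [PseudoMetricSpace Y] {u : ℝ → X} {v : ℝ → Y} (hv : AbsolutelyContinuousOnInterval v a b)
    (huv : ∀ x ∈ uIcc a b, ∀ y ∈ uIcc a b, dist (u x) (u y) ≤ dist (v x) (v y)) :
    AbsolutelyContinuousOnInterval u a b := by
  refine squeeze_zero' (.of_forall fun _ => Finset.sum_nonneg fun _ _ => dist_nonneg) ?_ hv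
  filter_upwards [Filter.mem_inf_of_right (Filter.mem_principal_self _)] with I hI
  exact Finset.sum_le_sum fun i hi => huv _ (hI.1 i hi).1 _ (hI.1 i hi).2

lemma absolutelyContinuousOnInterval_integral (hf : IntervalIntegrable f volume a b) :
    AbsolutelyContinuousOnInterval (fun x => ∫ r in a..x, f r) a b := by
  refine absolutelyContinuousOnInterval_of_dist_le
    (hf.norm.absolutelyContinuousOnInterval_intervalIntegral left_mem_uIcc) fun x hx y hy => ?_
  have hax : IntervalIntegrable f volume a x := hf.mono_set (uIcc_subset_uIcc_left hx)
  have hay : IntervalIntegrable f volume a y := hf.mono_set (uIcc_subset_uIcc_left hy)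
  rw [dist_eq_norm, Real.dist_eq, intervalIntegral.integral_interval_sub_left hax hay,
    intervalIntegral.integral_interval_sub_left hax.norm hay.norm]
  exact intervalIntegral.norm_integral_le_abs_integral_norm

lemma integral_eq_sub_of_ae_hasDerivAt [CompleteSpace E] (hf : AbsolutelyContinuousOnInterval f a b)
    (hf' : IntervalIntegrable f' volume a b)
    (hderiv : ∀ᵐ x, x ∈ uIcc a b → HasDerivAt f (f' x) x) :
    ∫ x in a..b, f' x = f b - f a := by
  have hzero : ∀ᵐ x, x ∈ uIcc a b → HasDerivAt (f - fun x => ∫ r in a..x, f' r) 0 x := by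
    filter_upwards [hderiv, hf'.ae_hasDerivAt_integral] with x hx hx' hxab
    simpa only [sub_self] using (hx hxab).sub (hx' hxab a left_mem_uIcc)
  obtain ⟨C, hC⟩ :=
    (hf.sub (absolutelyContinuousOnInterval_integral hf')).const_of_ae_hasDerivAt_zero hzero
  have hends := (hC b right_mem_uIcc).trans (hC a left_mem_uIcc).symm
  simp only [Pi.sub_apply, intervalIntegral.integral_same, sub_zero] at hends
  rw [← hends, sub_sub_cancel]

end AbsolutelyContinuous

section Primitive

variable {E : Type*} [NormedAddCommGroup E] [NormedSpace ℝ E]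

/-- `y` is locally absolutely continuous on `[t, ∞)` with `y' = g` almost everywhere there, encoded
by the integral identity. The values of `y` and `g` on `(-∞, t)` are irrelevant. -/
structure IsPrimitiveOnIci (t : ℝ) (g y : ℝ → E) : Prop where
  integrableOn_Icc : ∀ T, t ≤ T → IntegrableOn g (Icc t T)
  eq_add_integral : ∀ s, t ≤ s → y s = y t + ∫ r in t..s, g r

namespace IsPrimitiveOnIci

variable {t s : ℝ} {g g₁ g₂ y y₁ y₂ : ℝ → E}

lemma intervalIntegrable (h : IsPrimitiveOnIci t g y) (hs : t ≤ s) :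
    IntervalIntegrable g volume t s :=
  (intervalIntegrable_iff_integrableOn_Icc_of_le hs).2 (h.integrableOn_Icc s hs)

lemma continuousOn_Icc (h : IsPrimitiveOnIci t g y) (s : ℝ) : ContinuousOn y (Icc t s) := by
  obtain hs | hs := lt_or_ge s t
  · simp [Icc_eq_empty_of_lt hs]
  have hprim := intervalIntegral.continuousOn_primitive_interval' (h.intervalIntegrable hs)
    left_mem_uIcc
  rw [uIcc_of_le hs] at hprim
  exact (continuousOn_const.add hprim).congr fun u hu => h.eq_add_integral u hu.1

lemma continuousOn (h : IsPrimitiveOnIci t g y) : ContinuousOn y (Ici t) := fun s hs =>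
  (h.continuousOn_Icc (s + 1) s ⟨hs, by linarith⟩).mono_of_mem_nhdsWithin <| by
    rw [← Ici_inter_Iic]
    exact Filter.inter_mem self_mem_nhdsWithin
      (mem_nhdsWithin_of_mem_nhds (Iic_mem_nhds (by linarith)))

lemma sub (h₁ : IsPrimitiveOnIci t g₁ y₁) (h₂ : IsPrimitiveOnIci t g₂ y₂) :
    IsPrimitiveOnIci t (fun s => g₁ s - g₂ s) (fun s => y₁ s - y₂ s) where
  integrableOn_Icc T hT := (h₁.integrableOn_Icc T hT).sub (h₂.integrableOn_Icc T hT)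
  eq_add_integral s hs := by
    rw [h₁.eq_add_integral s hs, h₂.eq_add_integral s hs, intervalIntegral.integral_sub
      (h₁.intervalIntegrable hs) (h₂.intervalIntegrable hs), add_sub_add_comm]

lemma smul [CompleteSpace E] (h : IsPrimitiveOnIci t g y) {α : ℝ → ℝ} (hα : ContDiff ℝ 1 α) :
    IsPrimitiveOnIci t (fun s => α s • g s + deriv α s • y s) (fun s => α s • y s) := by
  have hint : ∀ T, t ≤ T → IntegrableOn (fun s => α s • g s + deriv α s • y s) (Icc t T) :=
    fun T hT => ((h.integrableOn_Icc T hT).continuousOn_smul hα.continuous.continuousOn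
      isCompact_Icc).add ((hα.continuous_deriv_one.continuousOn.smul
        (h.continuousOn_Icc T)).integrableOn_Icc)
  refine ⟨hint, fun s hs => ?_⟩
  set Y : ℝ → E := fun u => y t + ∫ r in t..u, g r
  have hyY : ∀ u ∈ uIcc t s, y u = Y u := fun u hu =>
    h.eq_add_integral u (uIcc_of_le hs ▸ hu).1
  have hY : AbsolutelyContinuousOnInterval Y t s :=
    (ContDiffOn.absolutelyContinuousOnInterval contDiffOn_const).add
      (absolutelyContinuousOnInterval_integral (h.intervalIntegrable hs))
  have hderiv : ∀ᵐ x, x ∈ uIcc t s →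
      HasDerivAt (α • Y) (α x • g x + deriv α x • y x) x := by
    filter_upwards [(h.intervalIntegrable hs).ae_hasDerivAt_integral] with x hx hxs
    rw [hyY x hxs]
    exact ((hα.differentiable one_ne_zero x).hasDerivAt).smul
      ((hx hxs t left_mem_uIcc).const_add (y t))
  have hftc := integral_eq_sub_of_ae_hasDerivAt
    (hα.contDiffOn.absolutelyContinuousOnInterval.smul hY)
    ((intervalIntegrable_iff_integrableOn_Icc_of_le hs).2 (hint s hs)) hderiv
  rw [hftc, hyY s right_mem_uIcc, hyY t left_mem_uIcc]
  exact (add_sub_cancel _ _).symm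

lemma eq_of_zero (h : IsPrimitiveOnIci t 0 y) (hs : t ≤ s) : y s = y t := by
  simpa using h.eq_add_integral s hs

end IsPrimitiveOnIci

lemma isPrimitiveOnIci_integral_Ici {t : ℝ} {g : ℝ → E} (hg : IntegrableOn g (Ici t)) :
    IsPrimitiveOnIci t (fun s => -g s) (fun s => ∫ r in Ici s, g r) where
  integrableOn_Icc T _ := (hg.mono_set Icc_subset_Ici_self).neg
  eq_add_integral s hs := by
    have hsplit := intervalIntegral.integral_interval_add_Ioi
      (hg.mono_set Ioi_subset_Ici_self) (hg.mono_set (Ioi_subset_Ici_iff.2 hs))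
    simp only [integral_Ici_eq_integral_Ioi, intervalIntegral.integral_neg, ← hsplit]
    abel

end Primitive

section Averaging

variable {E : Type*} [NormedAddCommGroup E] [NormedSpace ℝ E] {p : ℝ≥0∞}

lemma eLpNorm_integral_prod_le {α β : Type*} [MeasurableSpace α] [MeasurableSpace β]
    {μ : Measure α} {ν : Measure β} [IsProbabilityMeasure ν] (hp : 1 ≤ p) {F : α × β → E}
    (hF : AEStronglyMeasurable F (μ.prod ν)) :
    eLpNorm (fun x => ∫ y, F (x, y) ∂ν) p μ ≤ eLpNorm F p (μ.prod ν) := by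
  have jensen : ∀ᵐ x ∂μ, ‖∫ y, F (x, y) ∂ν‖ₑ ≤ eLpNorm (fun y => F (x, y)) p ν := by
    filter_upwards [hF.prodMk_left] with x hx
    calc ‖∫ y, F (x, y) ∂ν‖ₑ ≤ ∫⁻ y, ‖F (x, y)‖ₑ ∂ν := enorm_integral_le_lintegral_enorm _
      _ = eLpNorm (fun y => F (x, y)) 1 ν := eLpNorm_one_eq_lintegral_enorm.symm
      _ ≤ eLpNorm (fun y => F (x, y)) p ν := eLpNorm_le_eLpNorm_of_exponent_le hp hx
  obtain rfl | hp_top := eq_or_ne p ∞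
  · simp only [eLpNorm_exponent_top] at jensen ⊢
    refine essSup_le_of_ae_le _ ?_
    filter_upwards [jensen, Measure.ae_ae_of_ae_prod (enorm_ae_le_eLpNormEssSup F (μ.prod ν))]
      with x hx hFx
    exact hx.trans (essSup_le_of_ae_le _ hFx)
  · have hp0 : p ≠ 0 := (zero_lt_one.trans_le hp).ne'
    simp only [eLpNorm_eq_lintegral_rpow_enorm_toReal hp0 hp_top] at jensen ⊢
    gcongr
    rw [lintegral_prod _ (by fun_prop)]
    refine lintegral_mono_ae (jensen.mono fun x hx => ?_)
    rwa [one_div, ENNReal.le_rpow_inv_iff (ENNReal.toReal_pos hp0 hp_top)] at hx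

lemma restrict_Ici_conv_le (t : ℝ) {ν : Measure ℝ} [IsProbabilityMeasure ν]
    (hν : ∀ᵐ x ∂ν, 0 ≤ x) :
    (volume.restrict (Ici t)) ∗ ν ≤ volume.restrict (Ici t) := by
  refine Measure.le_iff.2 fun A hA => ?_
  have slice_le : ∀ᵐ x ∂ν, volume.restrict (Ici t) ((· + x) ⁻¹' A) ≤
      volume.restrict (Ici t) A := by
    filter_upwards [hν] with x hx
    rw [Measure.restrict_apply hA, Measure.restrict_apply (measurable_add_const x hA),
      ← measure_preimage_add_right volume x (A ∩ Ici t)]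
    exact measure_mono fun s hs => ⟨hs.1, le_add_of_le_of_nonneg hs.2 hx⟩
  calc ((volume.restrict (Ici t)) ∗ ν) A
      = ∫⁻ x, volume.restrict (Ici t) ((· + x) ⁻¹' A) ∂ν := by
        rw [Measure.conv, Measure.map_apply measurable_add hA,
          Measure.prod_apply_symm (measurable_add hA)]
        rfl
    _ ≤ ∫⁻ _, volume.restrict (Ici t) A ∂ν := lintegral_mono_ae slice_le
    _ = volume.restrict (Ici t) A := by simp

lemma memLp_integral_add {t : ℝ} {ν : Measure ℝ} [IsProbabilityMeasure ν]
    (hν : ∀ᵐ x ∂ν, 0 ≤ x) (hp : 1 ≤ p) {f : ℝ → E} (hf : MemLp f p (volume.restrict (Ici t))) :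
    MemLp (fun s => ∫ x, f (s + x) ∂ν) p (volume.restrict (Ici t)) := by
  have hF : MemLp (fun z : ℝ × ℝ => f (z.1 + z.2)) p ((volume.restrict (Ici t)).prod ν) :=
    (hf.mono_measure (restrict_Ici_conv_le t hν)).comp_of_map (by fun_prop)
  exact ⟨hF.1.integral_prod_right', (eLpNorm_integral_prod_le hp hF.1).trans_lt hF.2⟩

end Averaging

section Exponential

variable {E : Type*} [NormedAddCommGroup E] [NormedSpace ℝ E] {δ : ℝ}

lemma measurable_exponentialPDF (δ : ℝ) : Measurable (exponentialPDF δ) :=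
  (measurable_exponentialPDFReal δ).ennreal_ofReal

lemma expMeasure_eq_withDensity (δ : ℝ) :
    expMeasure δ = volume.withDensity (exponentialPDF δ) :=
  rfl

lemma ae_nonneg_expMeasure (δ : ℝ) : ∀ᵐ x ∂expMeasure δ, 0 ≤ x := by
  rw [expMeasure_eq_withDensity, ae_withDensity_iff (measurable_exponentialPDF δ)]
  exact .of_forall fun x hx => not_lt.1 fun hneg => hx (exponentialPDF_of_neg hneg)

lemma integral_expMeasure (hδ : 0 < δ) (f : ℝ → E) :
    ∫ x, f x ∂expMeasure δ = δ • ∫ x in Ici 0, Real.exp (-δ * x) • f x := by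
  rw [expMeasure_eq_withDensity, integral_withDensity_eq_integral_toReal_smul
    (measurable_exponentialPDF δ) (.of_forall fun _ => ENNReal.ofReal_lt_top),
    ← integral_smul, ← integral_indicator measurableSet_Ici]
  congr 1 with x
  obtain hx | hx := le_or_gt 0 x
  · rw [exponentialPDF_of_nonneg hx, ENNReal.toReal_ofReal (by positivity),
      indicator_of_mem (mem_Ici.2 hx), smul_smul, neg_mul]
  · rw [exponentialPDF_of_neg hx, indicator_of_notMem (notMem_Ici.2 hx), ENNReal.toReal_zero,
      zero_smul]

lemma memLp_exp_neg_mul_Ici (hδ : 0 < δ) (t : ℝ) (p : ℝ≥0∞) :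
    MemLp (fun s => Real.exp (-δ * s)) p (volume.restrict (Ici t)) := by
  have hmeas : AEStronglyMeasurable (fun s => Real.exp (-δ * s)) (volume.restrict (Ici t)) := by
    fun_prop
  obtain rfl | hp_top := eq_or_ne p ∞
  · refine memLp_top_of_bound hmeas (Real.exp (-δ * t)) ?_
    filter_upwards [ae_restrict_mem measurableSet_Ici] with s hs
    rw [Real.norm_eq_abs, Real.abs_exp, Real.exp_le_exp]
    exact mul_le_mul_of_nonpos_left hs (by linarith)
  obtain rfl | hp0 := eq_or_ne p 0
  · exact memLp_zero_iff_aestronglyMeasurable.2 hmeas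
  have hrate : -δ * p.toReal < 0 :=
    mul_neg_of_neg_of_pos (by linarith) (ENNReal.toReal_pos hp0 hp_top)
  rw [← integrable_norm_rpow_iff hmeas hp0 hp_top]
  simp only [Real.norm_eq_abs, Real.abs_exp, ← Real.exp_mul, mul_right_comm _ _ p.toReal]
  exact (integrableOn_Ici_iff_integrableOn_Ioi).2 (integrableOn_exp_mul_Ioi hrate t)

/-- The tail integral `s ↦ ∫_s^∞ e^{-κ(r-s)} φ(r) dr`, the decaying solution of `y' = κ y - φ`. -/
noncomputable def expTail (κ : ℝ) (φ : ℝ → E) (s : ℝ) : E :=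
  ∫ r in Ici s, Real.exp (-κ * (r - s)) • φ r

lemma expTail_eq_integral_expMeasure (hδ : 0 < δ) (φ : ℝ → E) (s : ℝ) :
    expTail δ φ s = δ⁻¹ • ∫ x, φ (s + x) ∂expMeasure δ := by
  have hshift := (measurePreserving_add_left volume s).setIntegral_preimage_emb
    (measurableEmbedding_addLeft s) (fun r => Real.exp (-δ * (r - s)) • φ r) (Ici s)
  rw [integral_expMeasure hδ, inv_smul_smul₀ hδ.ne', expTail, ← hshift]
  simp

lemma memLp_expTail (hδ : 0 < δ) {p : ℝ≥0∞} (hp : 1 ≤ p) {t : ℝ} {φ : ℝ → E}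
    (hφ : MemLp φ p (volume.restrict (Ici t))) :
    MemLp (expTail δ φ) p (volume.restrict (Ici t)) := by
  have := isProbabilityMeasure_expMeasure hδ
  rw [funext (expTail_eq_integral_expMeasure hδ φ)]
  exact (memLp_integral_add (ae_nonneg_expMeasure δ) hp hφ).const_smul δ⁻¹

lemma exp_smul_expTail (κ K : ℝ) (φ : ℝ → E) (s : ℝ) :
    Real.exp (K * s) • expTail κ φ s =
      expTail (κ + K) (fun r => Real.exp (K * r) • φ r) s := by
  simp only [expTail, ← integral_smul, smul_smul, ← Real.exp_add]
  ring_nf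

lemma expTail_eq_exp_smul_integral (κ : ℝ) (φ : ℝ → E) (s : ℝ) :
    expTail κ φ s = Real.exp (κ * s) • ∫ r in Ici s, Real.exp (-κ * r) • φ r := by
  simp only [expTail, ← integral_smul, smul_smul, ← Real.exp_add]
  congr! 4
  ring

lemma contDiff_exp_mul (c : ℝ) : ContDiff ℝ 1 fun s => Real.exp (c * s) := by fun_prop

lemma deriv_exp_mul (c s : ℝ) : deriv (fun s => Real.exp (c * s)) s = Real.exp (c * s) * c := by
  simpa using (((hasDerivAt_id s).const_mul c).exp).deriv

lemma isPrimitiveOnIci_expTail [CompleteSpace E] {κ t : ℝ} {φ : ℝ → E}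
    (hφ : IntegrableOn (fun r => Real.exp (-κ * r) • φ r) (Ici t)) :
    IsPrimitiveOnIci t (fun s => κ • expTail κ φ s - φ s) (expTail κ φ) := by
  have h := (isPrimitiveOnIci_integral_Ici hφ).smul (contDiff_exp_mul κ)
  simp only [← expTail_eq_exp_smul_integral] at h
  convert! h using 2 with s
  rw [deriv_exp_mul, mul_comm _ κ, mul_smul, ← expTail_eq_exp_smul_integral, smul_neg, smul_smul,
    ← Real.exp_add, neg_mul, add_neg_cancel, Real.exp_zero, one_smul, neg_add_eq_sub]

lemma IsPrimitiveOnIci.exp_neg_smul_eq [CompleteSpace E] {κ t s : ℝ} {w : ℝ → E}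
    (h : IsPrimitiveOnIci t (fun s => κ • w s) w) (hs : t ≤ s) :
    Real.exp (-κ * s) • w s = Real.exp (-κ * t) • w t := by
  refine IsPrimitiveOnIci.eq_of_zero (y := fun s => Real.exp (-κ * s) • w s) ?_ hs
  convert! h.smul (contDiff_exp_mul (-κ)) using 2 with s
  rw [deriv_exp_mul, smul_smul, ← add_smul, mul_neg, add_neg_cancel, zero_smul, Pi.zero_apply]

end Exponential

section WeightedSpace

variable {E : Type*} [NormedAddCommGroup E] [NormedSpace ℝ E] {t K κ : ℝ} {p : ℝ≥0∞}
  {φ f g : ℝ → E}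

/-- Membership in the weighted space `L^{p,K}(t,∞;E)`: the function `s ↦ e^{K s} f(s)` is in `L^p`
on `[t, ∞)`. -/
def MemWeightedLp (t K : ℝ) (p : ℝ≥0∞) (f : ℝ → E) : Prop :=
  MemLp (fun s => Real.exp (K * s) • f s) p (volume.restrict (Ici t))

lemma MemWeightedLp.sub (hf : MemWeightedLp t K p f) (hg : MemWeightedLp t K p g) :
    MemWeightedLp t K p (fun s => f s - g s) := by
  simp only [MemWeightedLp, smul_sub]
  exact MemLp.sub hf hg

lemma MemWeightedLp.integrableOn_exp_smul (hf : MemWeightedLp t K p f) (hp : 1 ≤ p) {c : ℝ}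
    (hc : c < K) : IntegrableOn (fun s => Real.exp (c * s) • f s) (Ici t) := by
  have := ENNReal.HolderConjugate.conjExponent hp
  have hprod := MemLp.smul (r := 1) hf
    (memLp_exp_neg_mul_Ici (sub_pos.2 hc) t p.conjExponent)
  refine (memLp_one_iff_integrable.1 hprod).congr (.of_forall fun s => ?_)
  simp only [Pi.smul_apply', smul_smul, ← Real.exp_add]
  ring_nf

lemma MemWeightedLp.expTail (hφ : MemWeightedLp t K p φ) (hp : 1 ≤ p) (hK : -κ < K) :
    MemWeightedLp t K p (expTail κ φ) := by
  simpa only [MemWeightedLp, exp_smul_expTail] using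
    memLp_expTail (neg_lt_iff_pos_add'.1 hK) hp hφ

lemma MemWeightedLp.eq_zero_of_isPrimitiveOnIci [CompleteSpace E] {w : ℝ → E}
    (hw : MemWeightedLp t K p w) (hp : 1 ≤ p) (hK : -κ < K)
    (h : IsPrimitiveOnIci t (fun s => κ • w s) w) {s : ℝ} (hs : t ≤ s) : w s = 0 := by
  have hconst : IntegrableOn (fun _ => Real.exp (-κ * t) • w t) (Ici t) :=
    (hw.integrableOn_exp_smul hp hK).congr_fun (fun r hr => h.exp_neg_smul_eq hr)
      measurableSet_Ici
  have hzero : Real.exp (-κ * t) • w t = 0 := by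
    simpa using (integrableOn_const_iff enorm_ne_top).1 hconst
  rw [← h.exp_neg_smul_eq hs] at hzero
  exact (smul_eq_zero_iff_right (Real.exp_ne_zero _)).1 hzero

/-- `y` is a locally absolutely continuous solution of `y' = κ y - φ` on `[t, ∞)` lying in the
weighted space `L^{p,K}(t,∞;E)`. -/
structure IsWeightedBwdSol (t K κ : ℝ) (p : ℝ≥0∞) (φ y : ℝ → E) : Prop where
  isPrimitiveOnIci : IsPrimitiveOnIci t (fun s => κ • y s - φ s) y
  memWeightedLp : MemWeightedLp t K p y

lemma isWeightedBwdSol_expTail [CompleteSpace E] (hp : 1 ≤ p) (hK : -κ < K)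
    (hφ : MemWeightedLp t K p φ) :
    IsWeightedBwdSol t K κ p φ (expTail κ φ) :=
  ⟨isPrimitiveOnIci_expTail (hφ.integrableOn_exp_smul hp hK), hφ.expTail hp hK⟩

lemma IsWeightedBwdSol.eqOn [CompleteSpace E] {y z : ℝ → E}
    (hy : IsWeightedBwdSol t K κ p φ y) (hz : IsWeightedBwdSol t K κ p φ z) (hp : 1 ≤ p)
    (hK : -κ < K) : EqOn y z (Ici t) := by
  have hdiff : IsPrimitiveOnIci t (fun s => κ • (y s - z s)) (fun s => y s - z s) := by
    simpa only [sub_sub_sub_cancel_right, ← smul_sub] using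
      hy.isPrimitiveOnIci.sub hz.isPrimitiveOnIci
  exact fun s hs => sub_eq_zero.1
    ((hy.memWeightedLp.sub hz.memWeightedLp).eq_zero_of_isPrimitiveOnIci hp hK hdiff hs)

end WeightedSpace

theorem stmt_10_general {E : Type*} [NormedAddCommGroup E] [NormedSpace ℝ E] [CompleteSpace E]
    {t K κ : ℝ} {p : ℝ≥0∞} (hp : 1 ≤ p) (hK : -κ < K) {φ : ℝ → E} (hφ : MemWeightedLp t K p φ) :
    ∃ y : ℝ → E, IsWeightedBwdSol t K κ p φ y ∧
      (∀ z : ℝ → E, IsWeightedBwdSol t K κ p φ z → ∀ s, t ≤ s → z s = y s) ∧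
      (∀ s, t ≤ s → y s = ∫ r in Ici s, Real.exp (-κ * (r - s)) • φ r) :=
  have hsol := isWeightedBwdSol_expTail hp hK hφ
  ⟨expTail κ φ, hsol, fun _ hz _ hs => hz.eqOn hsol hp hK hs, fun _ _ => rfl⟩

section EuclideanSpace

variable {t K κ : ℝ} {n : ℕ}

lemma memWeightedLp_two_iff {f : ℝ → Fin n → ℝ}
    (hf : AEStronglyMeasurable f (volume.restrict (Ici t))) :
    MemWeightedLp t K 2 f ↔
      IntegrableOn (fun s => Real.exp (2 * K * s) * (f s ⬝ᵥ f s)) (Ici t) := by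
  have hmeas : AEStronglyMeasurable (fun s => WithLp.toLp 2 (Real.exp (K * s) • f s))
      (volume.restrict (Ici t)) := by fun_prop
  have hsq : ∀ s, Real.exp (2 * K * s) * (f s ⬝ᵥ f s) =
      ‖WithLp.toLp 2 (Real.exp (K * s) • f s)‖ ^ 2 := fun s => by
    rw [WithLp.toLp_smul, norm_smul, mul_pow, Real.norm_eq_abs, Real.abs_exp, ← Real.exp_nat_mul,
      EuclideanSpace.real_norm_sq_eq, dotProduct]
    simp only [← sq, Nat.cast_ofNat, mul_assoc]
  rw [MemWeightedLp, memLp_pi_iff, ← memLp_piLp_iff (q := 2)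
    (f := fun s => WithLp.toLp 2 (Real.exp (K * s) • f s)), memLp_two_iff_integrable_sq_norm hmeas]
  simp only [hsq, IntegrableOn]

lemma isBwdSol_iff {φ y : ℝ → Fin n → ℝ} :
    IsBwdSol t K κ φ y ↔ IsWeightedBwdSol t K κ 2 φ y := by
  have key : IsPrimitiveOnIci t (fun s => κ • y s - φ s) y →
      (MemWeightedLp t K 2 y ↔
        IntegrableOn (fun s => Real.exp (2 * K * s) * (y s ⬝ᵥ y s)) (Ici t)) := fun h =>
    memWeightedLp_two_iff (h.continuousOn.aestronglyMeasurable measurableSet_Ici)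
  exact ⟨fun ⟨hint, heq, hL2⟩ => ⟨⟨hint, heq⟩, (key ⟨hint, heq⟩).2 hL2⟩,
    fun ⟨h, hL2⟩ => ⟨h.1, h.2, (key h).1 hL2⟩⟩

end EuclideanSpace

/-- Deterministic backward component of Lemma 3.7 (solvability of the
decoupled system (3.10) with α = 0): for `K > -κ₂` and `φ ∈ L^{2,K}(t,∞)`,
the infinite-horizon backward equation `y' = κ₂ y - φ` has a unique solution
in the weighted space, given explicitly by
`y(s) = ∫_s^∞ e^{-κ₂(r-s)} φ(r) dr`. -/
theorem stmt_10 (n : ℕ) (t K κ₂ : ℝ) (ht : 0 ≤ t) (hK : -κ₂ < K)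
    (φ : ℝ → (Fin n → ℝ)) (hφ : Measurable φ)
    (hφL2 : IntegrableOn (fun s => Real.exp (2*K*s) * (φ s ⬝ᵥ φ s)) (Set.Ici t)) :
    ∃ y : ℝ → (Fin n → ℝ), IsBwdSol t K κ₂ φ y ∧
      (∀ z : ℝ → (Fin n → ℝ), IsBwdSol t K κ₂ φ z → ∀ s, t ≤ s → z s = y s) ∧
      (∀ s, t ≤ s → y s = ∫ r in Set.Ici s, Real.exp (-κ₂ * (r - s)) • φ r) := by
  simpa only [isBwdSol_iff] using
    stmt_10_general one_le_two hK ((memWeightedLp_two_iff hφ.aestronglyMeasurable).2 hφL2)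
end
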